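/- arXiv:math/0501416 — 5 statements merged into one kernel-verified Lean document; each statement's English description precedes it below -/
import Mathlib

section
/- A lattice A with zero is amenable, i.e., for every lattice B with zero the tensor product A ⊗ B is a lattice, if and only if A is locally finite (every finite subset of A generates a finite sublattice) and every finite sublattice of A satisfies condition (T∨). -/
/-!
Call a bi-ideal capped if, up to the pairs in `⊥_{A,B}`, it is a finite union of boxes `↓a × ↓b`.
Intersections of capped bi-ideals are capped, and capped bi-ideals are finitely generated, so
`A ⊗ B` is a lattice as soon as all finitely generated bi-ideals of `A × B` are capped. Conversely,
embed `B` into the lattice `Shadow B` of pairs `(b, Z)`, `Z` a lower set containing `b`, by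
`b ↦ (b, ↓b)`. Intersecting the image of a bi-ideal of `A × B` with the bi-ideal generated by
`(t, (⊥, B))` keeps only the second components `(⊥, Z)`, whose joins are mere unions; if this
intersection is finitely generated, the original bi-ideal is capped. So `A` is amenable if and only
if the finitely generated bi-ideals of `A × B` are capped for every `B`.

If `A` is locally finite and its finite sublattices satisfy (T), a finitely generated bi-ideal is
determined by its sections `{b | (p, b) ∈ I}` over the join-irreducibles `p` of a finite sublattice.
The section at `p` is built from the generators and from the sections at the members of minimal
pairs of `p`, so well-founded induction along join-dependency shows that all sections are
principal, and finitely many caps suffice.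

In the other direction, take for `B` the order dual of `A` with a zero added. The elements `s` such
that `(s, s)` lies in the bi-ideal generated by the pairs `(a, a)`, `a ∈ F`, form a sublattice
containing `F`, and its nonzero elements are first coordinates of caps. Finally, if a finite
sublattice fails (T), it has a nonempty set `Z` of join-irreducibles each of which join-depends on
another member of `Z`. Let `B` be the lattice of rank functions on `A`. Each join-dependency step
inside `Z` produces, in one fixed finitely generated bi-ideal, pairs `(p, h)` with `h p` larger by
one, so `h p` is unbounded, whereas finitely many caps bound it.
-/

universe u

section BiIdeals

variable (A B : Type*) [SemilatticeSup A] [OrderBot A] [SemilatticeSup B] [OrderBot B]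

/-- `⊥_{A,B} = (A × {0}) ∪ ({0} × B)`. -/
def botPairs : Set (A × B) := {p | p.1 = ⊥ ∨ p.2 = ⊥}

/-- A bi-ideal of `A × B`. -/
def IsBiIdeal (I : Set (A × B)) : Prop :=
  (∀ p q : A × B, p.1 ≤ q.1 → p.2 ≤ q.2 → q ∈ I → p ∈ I) ∧
  botPairs A B ⊆ I ∧
  (∀ (a : A) (b₀ b₁ : B), (a, b₀) ∈ I → (a, b₁) ∈ I → (a, b₀ ⊔ b₁) ∈ I) ∧
  (∀ (a₀ a₁ : A) (b : B), (a₀, b) ∈ I → (a₁, b) ∈ I → (a₀ ⊔ a₁, b) ∈ I)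

/-- A finitely generated bi-ideal: the least bi-ideal containing some finite
subset of `A × B`. -/
def IsFGBiIdeal (J : Set (A × B)) : Prop :=
  ∃ F : Finset (A × B),
    IsLeast {I : Set (A × B) | IsBiIdeal A B I ∧ ↑F ⊆ I} J

/-- The tensor product `A ⊗ B` (the poset of finitely generated bi-ideals of
`A × B`, ordered by inclusion) is a lattice. -/
def TensorIsLattice : Prop :=
  ∀ I J : {K : Set (A × B) // IsFGBiIdeal A B K},
    (∃ s, IsLUB {I, J} s) ∧ (∃ m, IsGLB {I, J} m)

end BiIdeals

/-- `p` is join-irreducible. -/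
def SJoinIrr (S : Type*) [SemilatticeSup S] (p : S) : Prop :=
  ¬ IsBot p ∧ ∀ b c : S, b ⊔ c = p → b = p ∨ c = p

/-- A minimal pair `(p, I)`. -/
def SMinimalPair (S : Type*) [SemilatticeSup S] (p : S) (I : Finset S) : Prop :=
  SJoinIrr S p ∧ (∀ q ∈ I, SJoinIrr S q) ∧ 2 ≤ I.card ∧ p ∉ I ∧
  (∃ hI : I.Nonempty, p ≤ I.sup' hI id) ∧
  ∀ (J : Finset S) (hJ : J.Nonempty), (∀ q ∈ J, SJoinIrr S q) →
    (∀ x ∈ J, ∃ y ∈ I, x ≤ y) → p ≤ J.sup' hJ id → I ⊆ J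

/-- Condition (T). -/
def CondT (S : Type*) [SemilatticeSup S] : Prop :=
  ∃ r : S → S → Prop,
    (∀ p, SJoinIrr S p → r p p) ∧
    (∀ p q, SJoinIrr S p → SJoinIrr S q → r p q → r q p → p = q) ∧
    (∀ p q s, SJoinIrr S p → SJoinIrr S q → SJoinIrr S s → r p q → r q s → r p s) ∧
    (∀ p q, SJoinIrr S p → SJoinIrr S q → r p q ∨ r q p) ∧
    (∀ (p : S) (I : Finset S), SMinimalPair S p I → ∀ j ∈ I, r p j)

/-! ### Generated and capped bi-ideals -/

section Generation

variable {A B : Type*} [SemilatticeSup A] [OrderBot A] [SemilatticeSup B] [OrderBot B]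

namespace IsBiIdeal

variable {I J : Set (A × B)}

theorem mem_of_le (hI : IsBiIdeal A B I) {a a' : A} {b b' : B} (ha : a ≤ a') (hb : b ≤ b')
    (h : (a', b') ∈ I) : (a, b) ∈ I :=
  hI.1 (a, b) (a', b') ha hb h

theorem isLowerSet (hI : IsBiIdeal A B I) : IsLowerSet I :=
  fun _ _ h hx => hI.mem_of_le h.1 h.2 hx

theorem botPairs_subset (hI : IsBiIdeal A B I) : botPairs A B ⊆ I := hI.2.1

theorem bot_left_mem (hI : IsBiIdeal A B I) (b : B) : ((⊥ : A), b) ∈ I :=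
  hI.botPairs_subset (Or.inl rfl)

theorem bot_right_mem (hI : IsBiIdeal A B I) (a : A) : (a, (⊥ : B)) ∈ I :=
  hI.botPairs_subset (Or.inr rfl)

theorem sup_right_mem (hI : IsBiIdeal A B I) {a : A} {b b' : B} (h : (a, b) ∈ I)
    (h' : (a, b') ∈ I) : (a, b ⊔ b') ∈ I :=
  hI.2.2.1 a b b' h h'

theorem sup_left_mem (hI : IsBiIdeal A B I) {a a' : A} {b : B} (h : (a, b) ∈ I)
    (h' : (a', b) ∈ I) : (a ⊔ a', b) ∈ I :=
  hI.2.2.2 a a' b h h'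

theorem inter (hI : IsBiIdeal A B I) (hJ : IsBiIdeal A B J) : IsBiIdeal A B (I ∩ J) :=
  ⟨fun _ _ h h' hq => ⟨hI.mem_of_le h h' hq.1, hJ.mem_of_le h h' hq.2⟩,
    Set.subset_inter hI.botPairs_subset hJ.botPairs_subset,
    fun _ _ _ h h' => ⟨hI.sup_right_mem h.1 h'.1, hJ.sup_right_mem h.2 h'.2⟩,
    fun _ _ _ h h' => ⟨hI.sup_left_mem h.1 h'.1, hJ.sup_left_mem h.2 h'.2⟩⟩

theorem preimage_right {B' : Type*} [SemilatticeSup B'] [OrderBot B'] {I : Set (A × B')}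
    (hI : IsBiIdeal A B' I) (φ : SupBotHom B B') :
    IsBiIdeal A B {x | (x.1, φ x.2) ∈ I} := by
  refine ⟨fun p q h h' hq => hI.mem_of_le h (OrderHomClass.mono φ h') hq, ?_,
    fun a b b' h h' => ?_, fun _ _ _ => hI.sup_left_mem⟩
  · rintro ⟨a, b⟩ (rfl | rfl)
    · exact hI.bot_left_mem _
    · simpa only [Set.mem_ofPred_eq, map_bot] using hI.bot_right_mem a
  · simpa only [Set.mem_ofPred_eq, map_sup] using hI.sup_right_mem h h'

end IsBiIdeal

theorem isBiIdeal_botPairs_union {D : Set (A × B)} (hD : IsLowerSet D)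
    (sup_right : ∀ a b b', (a, b) ∈ D → (a, b') ∈ D → (a, b ⊔ b') ∈ D)
    (sup_left : ∀ a a' b, (a, b) ∈ D → (a', b) ∈ D → (a ⊔ a', b) ∈ D) :
    IsBiIdeal A B (botPairs A B ∪ D) := by
  refine ⟨fun p q h h' => ?_, Set.subset_union_left, fun a b b' => ?_, fun a a' b => ?_⟩
  · rintro ((hq | hq) | hq)
    · exact Or.inl (Or.inl (le_bot_iff.1 (hq ▸ h)))
    · exact Or.inl (Or.inr (le_bot_iff.1 (hq ▸ h')))
    · exact Or.inr (hD ⟨h, h'⟩ hq)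
  · rintro ((ha | hb) | h) h'
    · exact Or.inl (Or.inl ha)
    · obtain rfl : b = ⊥ := hb
      rwa [bot_sup_eq]
    · rcases h' with (ha | hb) | h'
      · exact Or.inl (Or.inl ha)
      · obtain rfl : b' = ⊥ := hb
        exact Or.inr (by rwa [sup_bot_eq])
      · exact Or.inr (sup_right a b b' h h')
  · rintro ((ha | hb) | h) h'
    · obtain rfl : a = ⊥ := ha
      rwa [bot_sup_eq]
    · exact Or.inl (Or.inr hb)
    · rcases h' with (ha | hb) | h'
      · obtain rfl : a' = ⊥ := ha
        exact Or.inr (by rwa [sup_bot_eq])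
      · exact Or.inl (Or.inr hb)
      · exact Or.inr (sup_left a a' b h h')

/-- The bi-ideal generated by a set of pairs. -/
def biIdealClosure (F : Set (A × B)) : Set (A × B) := ⋂₀ {I | IsBiIdeal A B I ∧ F ⊆ I}

theorem isBiIdeal_biIdealClosure (F : Set (A × B)) : IsBiIdeal A B (biIdealClosure F) :=
  ⟨fun _ _ h h' hq I hI => hI.1.mem_of_le h h' (hq I hI),
    fun _ h _ hI => hI.1.botPairs_subset h,
    fun _ _ _ h h' I hI => hI.1.sup_right_mem (h I hI) (h' I hI),
    fun _ _ _ h h' I hI => hI.1.sup_left_mem (h I hI) (h' I hI)⟩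

theorem subset_biIdealClosure (F : Set (A × B)) : F ⊆ biIdealClosure F :=
  fun _ h _ hI => hI.2 h

theorem biIdealClosure_subset {F I : Set (A × B)} (hI : IsBiIdeal A B I) (hF : F ⊆ I) :
    biIdealClosure F ⊆ I :=
  fun _ h => h I ⟨hI, hF⟩

theorem isFGBiIdeal_iff {I : Set (A × B)} :
    IsFGBiIdeal A B I ↔ ∃ F : Set (A × B), F.Finite ∧ I = biIdealClosure F := by
  have isLeast (F : Set (A × B)) :
      IsLeast {I | IsBiIdeal A B I ∧ F ⊆ I} (biIdealClosure F) :=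
    ⟨⟨isBiIdeal_biIdealClosure F, subset_biIdealClosure F⟩,
      fun _ hI => biIdealClosure_subset hI.1 hI.2⟩
  constructor
  · rintro ⟨F, hF⟩
    exact ⟨F, F.finite_toSet, hF.unique (isLeast F)⟩
  · rintro ⟨F, hF, rfl⟩
    exact ⟨hF.toFinset, by simpa only [hF.coe_toFinset] using isLeast F⟩

theorem isFGBiIdeal_biIdealClosure {F : Set (A × B)} (hF : F.Finite) :
    IsFGBiIdeal A B (biIdealClosure F) :=
  isFGBiIdeal_iff.2 ⟨F, hF, rfl⟩

theorem IsFGBiIdeal.isBiIdeal {I : Set (A × B)} (hI : IsFGBiIdeal A B I) : IsBiIdeal A B I :=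
  let ⟨_, hF⟩ := hI
  hF.1.1

theorem IsFGBiIdeal.exists_isLUB (I J : {K : Set (A × B) // IsFGBiIdeal A B K}) :
    ∃ K, IsLUB {I, J} K := by
  obtain ⟨F, hF, hI⟩ := isFGBiIdeal_iff.1 I.2
  obtain ⟨G, hG, hJ⟩ := isFGBiIdeal_iff.1 J.2
  refine ⟨⟨_, isFGBiIdeal_biIdealClosure (hF.union hG)⟩, ?_, fun K hK => ?_⟩
  · have hFG := Set.union_subset_iff.1 (subset_biIdealClosure (F ∪ G))
    rintro _ (rfl | rfl)
    · exact hI.trans_subset (biIdealClosure_subset (isBiIdeal_biIdealClosure _) hFG.1)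
    · exact hJ.trans_subset (biIdealClosure_subset (isBiIdeal_biIdealClosure _) hFG.2)
  · rw [upperBounds_insert, upperBounds_singleton] at hK
    exact biIdealClosure_subset K.2.isBiIdeal (Set.union_subset
      ((subset_biIdealClosure F).trans (hI.symm.trans_subset hK.1))
      ((subset_biIdealClosure G).trans (hJ.symm.trans_subset hK.2)))

theorem tensorIsLattice_iff_isFGBiIdeal_inter :
    TensorIsLattice A B ↔
      ∀ I J, IsFGBiIdeal A B I → IsFGBiIdeal A B J → IsFGBiIdeal A B (I ∩ J) := by
  constructor
  · intro h I J hI hJ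
    obtain ⟨-, M, hM⟩ := h ⟨I, hI⟩ ⟨J, hJ⟩
    have hMIJ : (M : Set (A × B)) ⊆ I ∩ J :=
      Set.subset_inter (hM.1 (Or.inl rfl)) (hM.1 (Or.inr rfl))
    have hIJM : I ∩ J ⊆ M := fun x hx => by
      have hle {K : Set (A × B)} (hK : IsFGBiIdeal A B K) (hxK : x ∈ K) :
          biIdealClosure {x} ⊆ K :=
        biIdealClosure_subset hK.isBiIdeal (Set.singleton_subset_iff.2 hxK)
      have hlb : ⟨_, isFGBiIdeal_biIdealClosure (Set.finite_singleton x)⟩ ∈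
          lowerBounds {(⟨I, hI⟩ : {K : Set (A × B) // IsFGBiIdeal A B K}), ⟨J, hJ⟩} := by
        rintro _ (rfl | rfl)
        · exact hle hI hx.1
        · exact hle hJ hx.2
      exact hM.2 hlb (subset_biIdealClosure _ rfl)
    exact hMIJ.antisymm hIJM ▸ M.2
  · intro h I J
    refine ⟨IsFGBiIdeal.exists_isLUB I J, ⟨_, h I J I.2 J.2⟩, ?_, fun K hK => ?_⟩
    · rintro _ (rfl | rfl)
      · exact Set.inter_subset_left
      · exact Set.inter_subset_right
    · exact Set.subset_inter (hK (Or.inl rfl)) (hK (Or.inr rfl))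

theorem exists_biIdealClosure_subset_fst_le {F : Set (A × B)} (hF : F.Finite) :
    ∃ t, biIdealClosure F ⊆ botPairs A B ∪ {x | x.1 ≤ t} := by
  refine ⟨hF.toFinset.sup Prod.fst, biIdealClosure_subset (isBiIdeal_botPairs_union ?_ ?_ ?_) ?_⟩
  · exact fun x y hyx hx => hyx.1.trans hx
  · exact fun _ _ _ h _ => h
  · exact fun _ _ _ h h' => sup_le h h'
  · exact fun x hx => Or.inr (Finset.le_sup (f := Prod.fst) (hF.mem_toFinset.2 hx))

end Generation

section Capped

/-- A bi-ideal is *capped* (Grätzer–Wehrung) if, apart from the pairs in `⊥_{A,B}`, it is a finite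
union of boxes `↓a × ↓b`; the pairs `(a, b)` are its caps. -/
def IsCapped {A B : Type*} [SemilatticeSup A] [OrderBot A] [SemilatticeSup B] [OrderBot B]
    (I : Set (A × B)) : Prop :=
  ∃ C : Set (A × B), C.Finite ∧ I = botPairs A B ∪ lowerClosure C

variable {A B : Type*}

theorem IsBiIdeal.exists_finite_supClosed [SemilatticeSup A] [OrderBot A] [Lattice B]
    [OrderBot B] {H C : Set (A × B)} (hH : IsBiIdeal A B H)
    (hC : C.Finite) (hCH : C ⊆ H) : ∃ C' : Set (A × B), C'.Finite ∧ C ⊆ C' ∧ C' ⊆ H ∧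
      ∀ x ∈ C', ∀ y ∈ C', (x.1 ⊔ y.1, x.2 ⊓ y.2) ∈ C' := by
  let e : A × B ≃ A × Bᵒᵈ := (Equiv.refl A).prodCongr OrderDual.toDual
  have hHe : SupClosed (e.symm ⁻¹' H) := fun x hx y hy =>
    hH.sup_left_mem (hH.mem_of_le le_rfl inf_le_left hx) (hH.mem_of_le le_rfl inf_le_right hy)
  have hS : SupClosed (supClosure (e '' C)) := supClosed_supClosure
  have hSH : supClosure (e '' C) ⊆ e.symm ⁻¹' H :=
    supClosure_min (Set.image_subset_iff.2 hCH) hHe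
  exact ⟨e ⁻¹' supClosure (e '' C), (hC.image e).supClosure.preimage e.injective.injOn,
    Set.image_subset_iff.1 subset_supClosure, fun x hx => hSH hx, fun x hx y hy => hS hx hy⟩

theorem IsBiIdeal.isFGBiIdeal_of_isCapped [SemilatticeSup A] [OrderBot A] [SemilatticeSup B]
    [OrderBot B] {I : Set (A × B)} (hI : IsBiIdeal A B I) (h : IsCapped I) :
    IsFGBiIdeal A B I := by
  obtain ⟨C, hC, hIC⟩ := h
  have hCI : C ⊆ I := hIC ▸ subset_lowerClosure.trans Set.subset_union_right
  have hgen := isBiIdeal_biIdealClosure C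
  refine isFGBiIdeal_iff.2 ⟨C, hC, subset_antisymm (hIC.trans_subset ?_)
    (biIdealClosure_subset hI hCI)⟩
  exact Set.union_subset hgen.botPairs_subset
    (lowerClosure_min (subset_biIdealClosure C) hgen.isLowerSet)

variable [Lattice A] [OrderBot A] [Lattice B] [OrderBot B]

open scoped SetFamily in
theorem IsCapped.inter {I J : Set (A × B)} (hI : IsCapped I) (hJ : IsCapped J) :
    IsCapped (I ∩ J) := by
  obtain ⟨C, hC, rfl⟩ := hI
  obtain ⟨D, hD, rfl⟩ := hJ
  exact ⟨C ⊼ D, Set.Finite.image2 _ hC hD, by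
    rw [lowerClosure_infs, LowerSet.coe_inf, Set.union_inter_distrib_left]⟩

theorem tensorIsLattice_of_isCapped (h : ∀ I, IsFGBiIdeal A B I → IsCapped I) :
    TensorIsLattice A B :=
  tensorIsLattice_iff_isFGBiIdeal_inter.2 fun I J hI hJ =>
    (hI.isBiIdeal.inter hJ.isBiIdeal).isFGBiIdeal_of_isCapped ((h I hI).inter (h J hJ))

end Capped

/-! ### Minimal pairs and join-dependency -/

section MinimalPairs

variable {L : Type*} [SemilatticeSup L]

theorem joinIrr_induction [WellFoundedLT L] {P : L → Prop} (bot : ∀ a, IsBot a → P a)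
    (irr : ∀ p, SJoinIrr L p → P p) (sup : ∀ a b, P a → P b → P (a ⊔ b)) (a : L) : P a := by
  induction a using WellFoundedLT.induction with
  | ind a ih =>
    by_cases ha : IsBot a
    · exact bot a ha
    by_cases hirr : SJoinIrr L a
    · exact irr a hirr
    obtain ⟨b, c, rfl, hb, hc⟩ : ∃ b c, b ⊔ c = a ∧ b ≠ a ∧ c ≠ a := by
      simpa only [SJoinIrr, ha, not_false_eq_true, true_and, not_forall, not_or, exists_prop]
        using hirr
    exact sup b c (ih b (le_sup_left.lt_of_ne hb)) (ih c (le_sup_right.lt_of_ne hc))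

theorem le_of_forall_joinIrr_le [WellFoundedLT L] {a z : L}
    (h : ∀ q, SJoinIrr L q → q ≤ a → q ≤ z) : a ≤ z :=
  joinIrr_induction (P := fun x => x ≤ a → x ≤ z) (fun _ hx _ => hx z) h
    (fun _ _ hb hc hbc => sup_le (hb (le_sup_left.trans hbc)) (hc (le_sup_right.trans hbc)))
    a le_rfl

theorem le_sup'_id_iff_mem_lowerBounds {p : L} {I : Finset L} (hI : I.Nonempty) :
    p ≤ I.sup' hI id ↔ p ∈ lowerBounds (upperBounds (I : Set L)) := by
  rw [(I.isLUB_sup' hI).upperBounds_eq, lowerBounds_Ici, Set.mem_Iic]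

theorem SJoinIrr.nonempty {p : L} (hp : SJoinIrr L p) {C : Set L}
    (hpC : p ∈ lowerBounds (upperBounds C)) : C.Nonempty := by
  by_contra hC
  rw [Set.not_nonempty_iff_eq_empty.1 hC, upperBounds_empty] at hpC
  exact hp.1 fun z => hpC (Set.mem_univ z)

/-- Here `p ≤ ⋁J` is written `p ∈ lowerBounds (upperBounds J)`, which makes sense for empty `J`. -/
theorem sMinimalPair_iff {p : L} {I : Finset L} :
    SMinimalPair L p I ↔ SJoinIrr L p ∧ (∀ q ∈ I, SJoinIrr L q) ∧ (∀ q ∈ I, ¬ p ≤ q) ∧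
      p ∈ lowerBounds (upperBounds (I : Set L)) ∧
      ∀ J : Finset L, (∀ q ∈ J, SJoinIrr L q) → (∀ x ∈ J, ∃ y ∈ I, x ≤ y) →
        p ∈ lowerBounds (upperBounds (J : Set L)) → I ⊆ J := by
  constructor
  · rintro ⟨hp, hirr, hcard, -, ⟨hne, hpI⟩, hmin⟩
    refine ⟨hp, hirr, fun q hq hpq => ?_, (le_sup'_id_iff_mem_lowerBounds hne).1 hpI,
      fun J hJ hJI hpJ => ?_⟩
    · have hIq : I ⊆ {q} := hmin {q} (Finset.singleton_nonempty q)
        (by simpa using hirr q hq) (by simpa using ⟨q, hq, le_rfl⟩) hpq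
      exact absurd (Finset.card_le_card hIq) (by rw [Finset.card_singleton]; omega)
    · have hJne : J.Nonempty := hp.nonempty hpJ
      exact hmin J hJne hJ hJI ((le_sup'_id_iff_mem_lowerBounds hJne).2 hpJ)
  · rintro ⟨hp, hirr, hnle, hpI, hmin⟩
    have hne : I.Nonempty := hp.nonempty hpI
    have hle := (le_sup'_id_iff_mem_lowerBounds hne).2 hpI
    refine ⟨hp, hirr, Finset.one_lt_card_iff_nontrivial.2
        (hne.exists_eq_singleton_or_nontrivial.resolve_left ?_),
      fun h => hnle p h le_rfl, ⟨hne, hle⟩,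
      fun J hJne hJ hJI hpJ => hmin J hJ hJI ((le_sup'_id_iff_mem_lowerBounds hJne).1 hpJ)⟩
    rintro ⟨q, rfl⟩
    exact hnle q (Finset.mem_singleton_self q) hle

section MinimalCover

/-- A minimal lower set among those whose join is above `p`. If `p` is join-irreducible and not in
`D`, then `p` and the maximal elements of `D` form a minimal pair. -/
def IsMinimalCover (p : L) (D : Set L) : Prop :=
  Minimal (fun D => IsLowerSet D ∧ p ∈ lowerBounds (upperBounds D)) D

variable {p : L} {D : Set L}

theorem exists_upperBounds_diff_not_le (hD : IsMinimalCover p D) {x : L}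
    (hx : Maximal (· ∈ D) x) : ∃ z ∈ upperBounds (D \ {x}), ¬ x ≤ z := by
  by_contra! h
  have hlower : IsLowerSet (D \ {x}) := fun a b hba ha =>
    ⟨hD.prop.1 hba ha.1, fun hbx => ha.2 (hx.eq_of_ge ha.1 (hbx ▸ hba))⟩
  have hub : upperBounds (D \ {x}) ⊆ upperBounds D := fun z hz y hy => by
    by_cases hyx : y = x
    · exact hyx ▸ h z hz
    · exact hz ⟨hy, hyx⟩
  exact (hD.le_of_le ⟨hlower, lowerBounds_mono_set hub hD.prop.2⟩ Set.sdiff_subset hx.prop).2 rfl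

theorem sJoinIrr_of_maximal (hD : IsMinimalCover p D) {x : L} (hx : Maximal (· ∈ D) x) :
    SJoinIrr L x := by
  obtain ⟨z, hz, hxz⟩ := exists_upperBounds_diff_not_le hD hx
  refine ⟨fun hbot => hxz (hbot z), ?_⟩
  rintro b c rfl
  by_contra! hbc
  exact hxz (sup_le (hz ⟨hD.prop.1 le_sup_left hx.prop, hbc.1⟩)
    (hz ⟨hD.prop.1 le_sup_right hx.prop, hbc.2⟩))

theorem sMinimalPair_of_maximal [Finite L] (hD : IsMinimalCover p D) (hp : SJoinIrr L p)
    (hpD : p ∉ D) {I : Finset L} (hI : ∀ x, x ∈ I ↔ Maximal (· ∈ D) x) : SMinimalPair L p I := by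
  have hDI : upperBounds (I : Set L) ⊆ upperBounds D := fun z hz x hx => by
    obtain ⟨m, hxm, hm⟩ := (Set.toFinite D).exists_le_maximal hx
    exact hxm.trans (hz ((hI m).2 hm))
  refine sMinimalPair_iff.2 ⟨hp, fun q hq => sJoinIrr_of_maximal hD ((hI q).1 hq),
    fun q hq hpq => hpD (hD.prop.1 hpq ((hI q).1 hq).prop),
    lowerBounds_mono_set hDI hD.prop.2, fun J _ hJI hpJ q hq => ?_⟩
  have hJD : ↑(lowerClosure (J : Set L)) ⊆ D := lowerClosure_min (fun x hx => by
    obtain ⟨y, hy, hxy⟩ := hJI x hx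
    exact hD.prop.1 hxy ((hI y).1 hy).prop) hD.prop.1
  have hq' := (hI q).1 hq
  obtain ⟨j, hj, hqj⟩ := hD.le_of_le ⟨(lowerClosure (J : Set L)).lower,
    by rwa [upperBounds_lowerClosure]⟩ hJD hq'.prop
  rwa [hq'.eq_of_le (hJD (subset_lowerClosure hj)) hqj]

end MinimalCover

theorem exists_sMinimalPair [Finite L] {p : L} (hp : SJoinIrr L p) {C : Set L}
    (hpC : p ∈ lowerBounds (upperBounds C)) (hn : ∀ c ∈ C, ¬ p ≤ c) :
    ∃ I, SMinimalPair L p I ∧ ∀ x ∈ I, ∃ c ∈ C, x ≤ c := by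
  obtain ⟨D, hDC, hD : IsMinimalCover p D⟩ := exists_minimal_le_of_wellFoundedLT
    (fun D : Set L => IsLowerSet D ∧ p ∈ lowerBounds (upperBounds D)) (lowerClosure C)
    ⟨(lowerClosure C).lower, by rwa [upperBounds_lowerClosure]⟩
  have hpD : p ∉ D := fun h =>
    let ⟨c, hc, hpc⟩ := hDC h
    hn c hc hpc
  have hI (x : L) : x ∈ (Set.toFinite {x | Maximal (· ∈ D) x}).toFinset ↔ Maximal (· ∈ D) x :=
    Set.Finite.mem_toFinset _
  exact ⟨_, sMinimalPair_of_maximal hD hp hpD hI, fun x hx => hDC ((hI x).1 hx).prop⟩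

theorem SMinimalPair.exists_not_le [Finite L] {p j : L} {I : Finset L} (hI : SMinimalPair L p I)
    (hj : j ∈ I) : ∃ a, ¬ p ≤ a ∧ (∀ q ∈ I, q ≠ j → q ≤ a) ∧ ∀ s < j, s ≤ a := by
  classical
  obtain ⟨-, hirr, -, -, hmin⟩ := sMinimalPair_iff.1 hI
  let J := I.erase j ∪ (Set.toFinite {q | SJoinIrr L q ∧ q < j}).toFinset
  have hmem {q : L} : q ∈ J ↔ (q ≠ j ∧ q ∈ I) ∨ (SJoinIrr L q ∧ q < j) := by
    simp only [J, Finset.mem_union, Finset.mem_erase, Set.Finite.mem_toFinset, Set.mem_ofPred_eq]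
  have hpJ : p ∉ lowerBounds (upperBounds (J : Set L)) := fun hpJ => by
    have hIJ := hmin J (fun q hq => (hmem.1 hq).elim (fun h => hirr q h.2) And.left)
      (fun q hq => (hmem.1 hq).elim (fun h => ⟨q, h.2, le_rfl⟩) fun h => ⟨j, hj, h.2.le⟩) hpJ
    exact (hmem.1 (hIJ hj)).elim (fun h => h.1 rfl) fun h => h.2.false
  obtain ⟨a, haJ, hpa⟩ : ∃ a ∈ upperBounds (J : Set L), ¬ p ≤ a := by
    simpa only [mem_lowerBounds, not_forall, exists_prop] using hpJ
  exact ⟨a, hpa, fun q hq hqj => haJ (hmem.2 (Or.inl ⟨hqj, hq⟩)), fun s hs =>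
    le_of_forall_joinIrr_le fun q hq hqs => haJ (hmem.2 (Or.inr ⟨hq, hqs.trans_lt hs⟩))⟩

theorem SMinimalPair.mem_of_forall_mem {A B : Type*} [SemilatticeSup A] [OrderBot A]
    [SemilatticeSup B] [OrderBot B] {p : L} {I : Finset L} (hI : SMinimalPair L p I)
    (f : SupHom L A) {H : Set (A × B)} (hH : IsBiIdeal A B H) {b : B}
    (h : ∀ i ∈ I, (f i, b) ∈ H) : (f p, b) ∈ H := by
  obtain ⟨-, -, -, -, ⟨hne, hpI⟩, -⟩ := hI
  have hsup : (f (I.sup' hne id), b) ∈ H :=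
    Finset.sup'_induction (p := fun a => (f a, b) ∈ H) hne id
      (fun x hx y hy => by simpa only [map_sup] using hH.sup_left_mem hx hy) h
  exact hH.mem_of_le (OrderHomClass.mono f hpI) le_rfl hsup

/-- The join-dependency relation: `j` occurs in some minimal pair of `p`. -/
def JoinDep (j p : L) : Prop := ∃ I, SMinimalPair L p I ∧ j ∈ I

theorem JoinDep.left {j p : L} (h : JoinDep j p) : SJoinIrr L j :=
  let ⟨_, hI, hj⟩ := h
  hI.2.1 j hj

theorem JoinDep.right {j p : L} (h : JoinDep j p) : SJoinIrr L p :=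
  let ⟨_, hI, _⟩ := h
  hI.1

theorem JoinDep.ne {j p : L} (h : JoinDep j p) : j ≠ p := by
  obtain ⟨I, hI, hj⟩ := h
  exact fun h => hI.2.2.2.1 (h ▸ hj)

theorem condT_iff_wellFounded_joinDep [Finite L] :
    CondT L ↔ WellFounded (JoinDep : L → L → Prop) := by
  constructor
  · rintro ⟨r, -, antisymm, trans, -, hr⟩
    let s : L → L → Prop := fun j p => SJoinIrr L j ∧ SJoinIrr L p ∧ r p j ∧ j ≠ p
    have : Std.Irrefl s := ⟨fun _ h => h.2.2.2 rfl⟩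
    have : IsTrans L s := ⟨fun a b c hab hbc => ⟨hab.1, hbc.2.1,
      trans c b a hbc.2.1 hab.2.1 hab.1 hbc.2.2.1 hab.2.2.1, by
        rintro rfl
        exact hab.2.2.2 (antisymm a b hab.1 hab.2.1 hbc.2.2.1 hab.2.2.1)⟩⟩
    refine (Finite.wellFounded_of_trans_of_irrefl s).mono fun j p h => ?_
    have ⟨I, hI, hj⟩ := h
    exact ⟨h.left, h.right, hr p I hI j hj, h.ne⟩
  · intro hwf
    have : IsWellFounded L JoinDep := ⟨hwf⟩
    obtain ⟨s, hs, _⟩ := IsWellFounded.exists_well_order_ge (JoinDep (L := L))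
    classical
    let o : LinearOrder L := linearOrderOfSTO s
    exact ⟨fun p q => o.le q p, fun p _ => o.le_refl p, fun p q _ _ h h' => o.le_antisymm p q h' h,
      fun p q t _ _ _ h h' => o.le_trans t q p h' h, fun p q _ _ => o.le_total q p,
      fun p I hI j hj => Or.inr (hs j p ⟨I, hI, hj⟩)⟩

end MinimalPairs

/-! ### Bi-ideals over a finite lattice satisfying (T) -/

section Sufficiency

theorem exists_forall_iff_le_of_finite {ι B : Type*} [SemilatticeInf B] {P : Set ι}
    (hP : P.Finite) (hne : P.Nonempty) {R : ι → B → Prop}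
    (h : ∀ i ∈ P, ∃ g, ∀ b, R i b ↔ b ≤ g) : ∃ m, ∀ b, (∀ i ∈ P, R i b) ↔ b ≤ m := by
  have : Nonempty B := hne.elim fun i hi => ⟨(h i hi).choose⟩
  choose! g hg using h
  refine ⟨hP.toFinset.inf' (hP.toFinset_nonempty.2 hne) g, fun b => ?_⟩
  simp only [Finset.le_inf'_iff, hP.mem_toFinset]
  exact forall₂_congr fun i hi => hg i hi b

variable {L A B : Type*}

section SemilatticeSup

variable [SemilatticeSup L] [SemilatticeSup A] [OrderBot A]

/-- For join-irreducible `p`, the second coordinates `b` of the pairs `(p, b)` of the bi-ideal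
generated by `G`. The closure under left joins is replaced by a rule for minimal pairs, which
keeps all the pairs involved join-irreducible on the left. -/
inductive IrrSection [SemilatticeSup B] [OrderBot B] (G : Set (L × B)) : L → B → Prop
  | bot (p : L) : IrrSection G p ⊥
  | of_mem {p q : L} {b : B} : (q, b) ∈ G → p ≤ q → IrrSection G p b
  | of_le {p : L} {b b' : B} : b ≤ b' → IrrSection G p b' → IrrSection G p b
  | sup {p : L} {b b' : B} : IrrSection G p b → IrrSection G p b' → IrrSection G p (b ⊔ b')
  | of_minimalPair {p : L} {I : Finset L} {b : B} :
      SMinimalPair L p I → (∀ i ∈ I, IrrSection G i b) → IrrSection G p b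

namespace IrrSection

section

variable [SemilatticeSup B] [OrderBot B] {G : Set (L × B)} {p : L} {b : B}

theorem of_cover [Finite L] (hp : SJoinIrr L p) {C : Set L}
    (hpC : p ∈ lowerBounds (upperBounds C))
    (h : ∀ c ∈ C, ∀ q, SJoinIrr L q → q ≤ c → IrrSection G q b) : IrrSection G p b := by
  by_cases hn : ∃ c ∈ C, p ≤ c
  · obtain ⟨c, hc, hpc⟩ := hn
    exact h c hc p hp hpc
  · push Not at hn
    obtain ⟨I, hI, hIC⟩ := exists_sMinimalPair hp hpC hn
    refine of_minimalPair hI fun i hi => ?_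
    obtain ⟨c, hc, hic⟩ := hIC i hi
    exact h c hc i (hI.2.1 i hi) hic

theorem mem (f : SupHom L A) {H : Set (A × B)} (hH : IsBiIdeal A B H)
    (hG : ∀ x ∈ G, (f x.1, x.2) ∈ H) (h : IrrSection G p b) : (f p, b) ∈ H := by
  induction h with
  | bot p => exact hH.bot_right_mem _
  | of_mem hx hpq => exact hH.mem_of_le (OrderHomClass.mono f hpq) le_rfl (hG _ hx)
  | of_le hb _ ih => exact hH.mem_of_le le_rfl hb ih
  | sup _ _ ih ih' => exact hH.sup_right_mem ih ih'
  | of_minimalPair hI _ ih => exact SMinimalPair.mem_of_forall_mem hI f hH ih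

theorem le_of_forall {z : B} (hG : ∀ x ∈ G, p ≤ x.1 → x.2 ≤ z)
    (hI : ∀ I b, SMinimalPair L p I → (∀ i ∈ I, IrrSection G i b) → b ≤ z)
    (h : IrrSection G p b) : b ≤ z := by
  induction h with
  | bot p => exact bot_le
  | of_mem hx hpq => exact hG _ hx hpq
  | of_le hb _ ih => exact hb.trans (ih hG hI)
  | sup _ _ ih ih' => exact sup_le (ih hG hI) (ih' hG hI)
  | of_minimalPair hpI h => exact hI _ _ hpI h

end

theorem exists_iff_le [Lattice B] [OrderBot B] [Finite L]
    (hwf : WellFounded (JoinDep : L → L → Prop)) {G : Set (L × B)} (hG : G.Finite) (p : L) :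
    ∃ g, ∀ b, IrrSection G p b ↔ b ≤ g := by
  induction p using hwf.induction with
  | h p ih =>
    have hglb (I : Finset L) : ∃ m, SMinimalPair L p I →
        ∀ b, (∀ i ∈ I, IrrSection G i b) ↔ b ≤ m := by
      by_cases hI : SMinimalPair L p I
      · obtain ⟨m, hm⟩ := exists_forall_iff_le_of_finite I.finite_toSet hI.2.2.2.2.1.1
          fun i hi => ih i ⟨I, hI, hi⟩
        exact ⟨m, fun _ => hm⟩
      · exact ⟨⊥, fun h => absurd h hI⟩
    choose m hm using hglb
    have hT : (Prod.snd '' {x ∈ G | p ≤ x.1} ∪ m '' {I | SMinimalPair L p I}).Finite :=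
      ((hG.subset (Set.sep_subset _ _)).image _).union ((Set.toFinite _).image _)
    have hsup : IrrSection G p (hT.toFinset.sup id) := by
      refine Finset.sup_induction (bot p) (fun _ h _ h' => sup h h') fun b hb => ?_
      rcases hT.mem_toFinset.1 hb with ⟨x, hx, rfl⟩ | ⟨I, hI, rfl⟩
      · exact of_mem hx.1 hx.2
      · exact of_minimalPair hI ((hm I hI _).2 le_rfl)
    have hle {b : B} (hb : b ∈ Prod.snd '' {x ∈ G | p ≤ x.1} ∪ m '' {I | SMinimalPair L p I}) :
        b ≤ hT.toFinset.sup id :=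
      Finset.le_sup (f := id) (hT.mem_toFinset.2 hb)
    refine ⟨_, fun b => ⟨le_of_forall (fun x hx hpx => hle (Or.inl ⟨x, ⟨hx, hpx⟩, rfl⟩))
      fun I b hI hb => ?_, fun hb => of_le hb hsup⟩⟩
    exact ((hm I hI b).1 hb).trans (hle (Or.inr ⟨I, hI, rfl⟩))

end IrrSection

end SemilatticeSup

variable [Lattice L] [Lattice A] [OrderBot A]

theorem isBiIdeal_irrSection [SemilatticeSup B] [OrderBot B] [Finite L] (f : LatticeHom L A)
    (G : Set (L × B)) : IsBiIdeal A B (botPairs A B ∪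
      {x | ∃ s, x.1 ≤ f s ∧ ∀ p, SJoinIrr L p → p ≤ s → IrrSection G p x.2}) := by
  refine isBiIdeal_botPairs_union ?_ ?_ ?_
  · rintro x y hyx ⟨s, hxs, h⟩
    exact ⟨s, hyx.1.trans hxs, fun p hp hps => .of_le hyx.2 (h p hp hps)⟩
  · rintro a b b' ⟨s, has, hs⟩ ⟨t, hat, ht⟩
    exact ⟨s ⊓ t, (le_inf has hat).trans_eq (map_inf f s t).symm, fun p hp hpst =>
      .sup (hs p hp (hpst.trans inf_le_left)) (ht p hp (hpst.trans inf_le_right))⟩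
  · rintro a a' b ⟨s, has, hs⟩ ⟨t, hat, ht⟩
    refine ⟨s ⊔ t, (sup_le_sup has hat).trans_eq (map_sup f s t).symm, fun p hp hpst => ?_⟩
    refine .of_cover hp (C := {s, t}) ?_ ?_
    · rwa [isLUB_pair.upperBounds_eq, lowerBounds_Ici]
    · rintro _ (rfl | rfl)
      exacts [hs, ht]

theorem biIdealClosure_image_eq [SemilatticeSup B] [OrderBot B] [Finite L] {f : LatticeHom L A}
    (hf : ∀ a, IsBot a → f a = ⊥) (G : Set (L × B)) :
    biIdealClosure (Prod.map f id '' G) = botPairs A B ∪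
      {x | ∃ s, x.1 ≤ f s ∧ ∀ p, SJoinIrr L p → p ≤ s → IrrSection G p x.2} := by
  have hH := isBiIdeal_biIdealClosure (Prod.map f id '' G)
  refine subset_antisymm (biIdealClosure_subset (isBiIdeal_irrSection f G) ?_)
    (Set.union_subset hH.botPairs_subset ?_)
  · rintro _ ⟨x, hx, rfl⟩
    exact Or.inr ⟨x.1, le_rfl, fun p _ hp => .of_mem hx hp⟩
  · rintro ⟨a, b⟩ ⟨s, has, hs⟩
    have hmem : s ≤ s → (f s, b) ∈ biIdealClosure (Prod.map f id '' G) :=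
      joinIrr_induction (P := fun t => t ≤ s → (f t, b) ∈ biIdealClosure (Prod.map f id '' G))
        (fun t ht _ => hf t ht ▸ hH.bot_left_mem b)
        (fun p hp hps => (hs p hp hps).mem f.toSupHom hH
          fun x hx => subset_biIdealClosure _ ⟨x, hx, rfl⟩)
        (fun t t' ht ht' h => by
          simpa only [map_sup] using
            hH.sup_left_mem (ht (le_sup_left.trans h)) (ht' (le_sup_right.trans h))) s
    exact hH.mem_of_le has le_rfl (hmem le_rfl)

variable [Lattice B] [OrderBot B]

theorem isCapped_biIdealClosure_image [Finite L] (hL : CondT L) {f : LatticeHom L A}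
    (hf : ∀ a, IsBot a → f a = ⊥) {G : Set (L × B)} (hG : G.Finite) :
    IsCapped (biIdealClosure (Prod.map f id '' G)) := by
  have hglb (s : L) : ∃ m, ¬ IsBot s →
      ∀ b, (∀ p ∈ {p | SJoinIrr L p ∧ p ≤ s}, IrrSection G p b) ↔ b ≤ m := by
    by_cases hs : IsBot s
    · exact ⟨⊥, fun h => absurd hs h⟩
    have hne : {p | SJoinIrr L p ∧ p ≤ s}.Nonempty := by
      by_contra! h
      exact hs fun z => le_of_forall_joinIrr_le fun q hq hqs =>
        (Set.eq_empty_iff_forall_notMem.1 h q ⟨hq, hqs⟩).elim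
    obtain ⟨m, hm⟩ := exists_forall_iff_le_of_finite (Set.toFinite _) hne
      fun p _ => IrrSection.exists_iff_le (condT_iff_wellFounded_joinDep.1 hL) hG p
    exact ⟨m, fun _ => hm⟩
  choose m hm using hglb
  refine ⟨(fun s => (f s, m s)) '' {s | ¬ IsBot s}, (Set.toFinite _).image _, ?_⟩
  rw [biIdealClosure_image_eq hf]
  refine subset_antisymm (Set.union_subset Set.subset_union_left ?_)
    (Set.union_subset_union_right _ ?_)
  · rintro ⟨a, b⟩ ⟨s, has, hb⟩
    by_cases hs : IsBot s
    · exact Or.inl (Or.inl (le_bot_iff.1 (has.trans_eq (hf s hs))))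
    · exact Or.inr ⟨_, ⟨s, hs, rfl⟩, has, (hm s hs b).1 fun p hp => hb p hp.1 hp.2⟩
  · rintro ⟨a, b⟩ ⟨_, ⟨s, hs, rfl⟩, has, hb⟩
    exact ⟨s, has, fun p hp hps => (hm s hs b).2 hb p ⟨hp, hps⟩⟩

theorem isCapped_biIdealClosure_of_sublattice {K : Sublattice A} [Finite K] (hK : CondT K)
    (hbot : ⊥ ∈ K) {F : Set (A × B)} (hF : F.Finite) (hFK : ∀ x ∈ F, x.1 ∈ K) :
    IsCapped (biIdealClosure F) := by
  have hinj : Function.Injective (Prod.map K.subtype id : K × B → A × B) :=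
    Subtype.val_injective.prodMap Function.injective_id
  have hFrange : F ⊆ Set.range (Prod.map K.subtype id : K × B → A × B) :=
    fun x hx => ⟨(⟨x.1, hFK x hx⟩, x.2), rfl⟩
  rw [← Set.image_preimage_eq_of_subset hFrange]
  exact isCapped_biIdealClosure_image hK (fun a ha => le_bot_iff.1 (ha ⟨⊥, hbot⟩))
    (hF.preimage hinj.injOn)

end Sufficiency

/-! ### Tensoring with the shadow lattice -/

section Shadow

/-- The lattice of pairs of a point of `B` and a lower set containing it, ordered componentwise.
Its elements with point `⊥` are the lower sets of `B` containing `⊥`. -/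
@[ext] structure Shadow (B : Type*) [LE B] where
  pt : B
  shade : LowerSet B
  pt_mem : pt ∈ shade

namespace Shadow

variable {B : Type*}

instance [PartialOrder B] : PartialOrder (Shadow B) :=
  PartialOrder.lift (fun β => (β.pt, β.shade)) fun _ _ h =>
    Shadow.ext (congrArg Prod.fst h) (congrArg Prod.snd h)

theorem Iic_le_shade [Preorder B] {b : B} {β : Shadow B} (h : b ≤ β.pt) :
    LowerSet.Iic b ≤ β.shade :=
  LowerSet.Iic_le.2 (β.shade.lower h β.pt_mem)

variable [Lattice B]

instance : Lattice (Shadow B) where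
  sup β γ := ⟨β.pt ⊔ γ.pt, β.shade ⊔ γ.shade ⊔ LowerSet.Iic (β.pt ⊔ γ.pt), Or.inr le_rfl⟩
  inf β γ := ⟨β.pt ⊓ γ.pt, β.shade ⊓ γ.shade, β.shade.lower inf_le_left β.pt_mem,
    γ.shade.lower inf_le_right γ.pt_mem⟩
  le_sup_left _ _ := ⟨le_sup_left, le_sup_left.trans le_sup_left⟩
  le_sup_right _ _ := ⟨le_sup_right, le_sup_right.trans le_sup_left⟩
  sup_le _ _ _ h h' :=
    have hpt := sup_le h.1 h'.1
    ⟨hpt, sup_le (sup_le h.2 h'.2) (Iic_le_shade hpt)⟩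
  inf_le_left _ _ := ⟨inf_le_left, inf_le_left⟩
  inf_le_right _ _ := ⟨inf_le_right, inf_le_right⟩
  le_inf _ _ _ h h' := ⟨le_inf h.1 h'.1, le_inf h.2 h'.2⟩

variable [OrderBot B]

instance : OrderBot (Shadow B) where
  bot := ⟨⊥, LowerSet.Iic ⊥, le_rfl⟩
  bot_le _ := ⟨bot_le, Iic_le_shade bot_le⟩

/-- The embedding `b ↦ (b, ↓b)`. -/
def emb : SupBotHom B (Shadow B) where
  toFun b := ⟨b, LowerSet.Iic b, le_rfl⟩
  map_sup' _ _ := Shadow.ext rfl (sup_eq_right.2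
    (sup_le (LowerSet.Iic_le.2 le_sup_left) (LowerSet.Iic_le.2 le_sup_right))).symm
  map_bot' := rfl

theorem emb_inf_le (b c : B) : emb b ⊓ emb c ≤ emb (b ⊓ c) :=
  ⟨le_rfl, fun _ h => le_inf h.1 h.2⟩

variable {A : Type*} [SemilatticeSup A] [OrderBot A]

theorem exists_le_emb_of_mem {F : Set (A × B)} {x : A × Shadow B}
    (hx : x ∈ biIdealClosure (Prod.map id emb '' F)) :
    x ∈ botPairs A (Shadow B) ∪ {x | ∃ b, (x.1, b) ∈ biIdealClosure F ∧ x.2 ≤ emb b} := by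
  have hH := isBiIdeal_biIdealClosure F
  refine biIdealClosure_subset (isBiIdeal_botPairs_union ?_ ?_ ?_) ?_ hx
  · rintro x y hyx ⟨b, hb, hxb⟩
    exact ⟨b, hH.mem_of_le hyx.1 le_rfl hb, hyx.2.trans hxb⟩
  · rintro a β γ ⟨b, hb, hβ⟩ ⟨c, hc, hγ⟩
    exact ⟨b ⊔ c, hH.sup_right_mem hb hc, (sup_le_sup hβ hγ).trans_eq (map_sup emb b c).symm⟩
  · rintro a a' β ⟨b, hb, hβ⟩ ⟨c, hc, hγ⟩
    exact ⟨b ⊓ c, hH.sup_left_mem (hH.mem_of_le le_rfl inf_le_left hb)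
      (hH.mem_of_le le_rfl inf_le_right hc), (le_inf hβ hγ).trans (emb_inf_le b c)⟩
  · rintro _ ⟨x, hx, rfl⟩
    exact Or.inr ⟨x.2, subset_biIdealClosure F hx, le_rfl⟩

theorem mk_emb_mem_biIdealClosure {F : Set (A × B)} {x : A × B} (hx : x ∈ biIdealClosure F) :
    (x.1, emb x.2) ∈ biIdealClosure (Prod.map id emb '' F) :=
  biIdealClosure_subset ((isBiIdeal_biIdealClosure _).preimage_right emb)
    (fun _ hy => subset_biIdealClosure _ (Set.mem_image_of_mem _ hy)) hx

theorem mem_botPairs_or_pt_eq_bot {t : A} {x : A × Shadow B}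
    (hx : x ∈ biIdealClosure {(t, ⟨⊥, ⊤, trivial⟩)}) :
    x ∈ botPairs A (Shadow B) ∪ {x | x.2.pt = ⊥} := by
  refine biIdealClosure_subset (isBiIdeal_botPairs_union ?_ ?_ ?_) ?_ hx
  · exact fun x y hyx hx => le_bot_iff.1 (hyx.2.1.trans_eq hx)
  · exact fun a β γ hβ hγ => (congrArg₂ (· ⊔ ·) hβ hγ).trans (bot_sup_eq _)
  · exact fun _ _ _ hβ _ => hβ
  · exact Set.singleton_subset_iff.2 (Or.inr rfl)

/-- `D` need only be closed under *left* joins: joins in `Shadow B` of elements with point `⊥` are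
unions of lower sets. -/
theorem isBiIdeal_shade_subset {D : Set (A × B)} (hD : IsLowerSet D)
    (hsup : ∀ a a' b, (a, b) ∈ D → (a', b) ∈ D → (a ⊔ a', b) ∈ D) :
    IsBiIdeal A (Shadow B) (botPairs A (Shadow B) ∪
      {x | x.2.pt = ⊥ ∧ ∀ b ∈ x.2.shade, b = ⊥ ∨ (x.1, b) ∈ D}) := by
  refine isBiIdeal_botPairs_union ?_ ?_ ?_
  · rintro x y hyx ⟨hx, h⟩
    exact ⟨le_bot_iff.1 (hyx.2.1.trans_eq hx), fun b hb =>
      (h b (hyx.2.2 hb)).imp_right fun hxb => hD (Prod.mk_le_mk.2 ⟨hyx.1, le_rfl⟩) hxb⟩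
  · rintro a β γ ⟨hβ, h⟩ ⟨hγ, h'⟩
    have hpt : β.pt ⊔ γ.pt = ⊥ := (congrArg₂ (· ⊔ ·) hβ hγ).trans (bot_sup_eq _)
    refine ⟨hpt, ?_⟩
    rintro b ((hb | hb) | hb)
    · exact h b hb
    · exact h' b hb
    · exact Or.inl (le_bot_iff.1 (hpt ▸ hb))
  · rintro a a' β ⟨hβ, h⟩ ⟨-, h'⟩
    refine ⟨hβ, fun b hb => ?_⟩
    obtain rfl | hab := h b hb
    · exact Or.inl rfl
    · exact (h' b hb).imp_right (hsup a a' b hab)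

theorem exists_shade_subset_of_subset {F : Set (A × B)} {E : Set (A × Shadow B)} (hE : E.Finite)
    (hEF : E ⊆ biIdealClosure (Prod.map id emb '' F)) :
    ∃ C : Set (A × B), C.Finite ∧ C ⊆ biIdealClosure F ∧
      ∀ x ∈ E, x ∈ botPairs A (Shadow B) ∨ ∀ b ∈ x.2.shade, (x.1, b) ∈ lowerClosure C := by
  have hcap : ∀ x ∈ E, ∃ b, (x.1, b) ∈ biIdealClosure F ∧
      (x ∈ botPairs A (Shadow B) ∨ x.2 ≤ emb b) := fun x hx => by
    obtain h | ⟨b, hb, hxb⟩ := exists_le_emb_of_mem (hEF hx)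
    · exact ⟨⊥, (isBiIdeal_biIdealClosure F).bot_right_mem _, Or.inl h⟩
    · exact ⟨b, hb, Or.inr hxb⟩
  choose! c hc hxc using hcap
  refine ⟨(fun x : A × Shadow B => (x.1, c x)) '' E, hE.image _, Set.image_subset_iff.2 hc,
    fun x hx => ?_⟩
  exact (hxc x hx).imp_right fun h b hb => ⟨_, ⟨x, hx, rfl⟩, le_rfl, h.2 hb⟩

theorem mk_Iic_mem_inter {F : Set (A × B)} {t : A} {x : A × B} (hx : x ∈ biIdealClosure F)
    (hxt : x.1 ≤ t) : (x.1, (⟨⊥, LowerSet.Iic x.2, bot_le⟩ : Shadow B)) ∈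
      biIdealClosure (Prod.map id emb '' F) ∩ biIdealClosure {(t, ⟨⊥, ⊤, trivial⟩)} := by
  have hemb : (⟨⊥, LowerSet.Iic x.2, bot_le⟩ : Shadow B) ≤ emb x.2 := ⟨bot_le, le_rfl⟩
  have htop : (⟨⊥, LowerSet.Iic x.2, bot_le⟩ : Shadow B) ≤ ⟨⊥, ⊤, trivial⟩ := ⟨le_rfl, le_top⟩
  exact ⟨(isBiIdeal_biIdealClosure _).mem_of_le le_rfl hemb (mk_emb_mem_biIdealClosure hx),
    (isBiIdeal_biIdealClosure _).mem_of_le hxt htop (subset_biIdealClosure _ rfl)⟩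

end Shadow

open Shadow

theorem isCapped_of_tensorIsLattice_shadow {A B : Type*} [SemilatticeSup A] [OrderBot A] [Lattice B]
    [OrderBot B] (h : TensorIsLattice A (Shadow B)) {H : Set (A × B)} (hH : IsFGBiIdeal A B H) :
    IsCapped H := by
  obtain ⟨F, hF, rfl⟩ := isFGBiIdeal_iff.1 hH
  obtain ⟨t, ht⟩ := exists_biIdealClosure_subset_fst_le hF
  obtain ⟨E, hE, hinter⟩ := isFGBiIdeal_iff.1 (tensorIsLattice_iff_isFGBiIdeal_inter.1 h _ _
    (isFGBiIdeal_biIdealClosure (hF.image (Prod.map id emb)))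
    (isFGBiIdeal_biIdealClosure (Set.finite_singleton (t, ⟨⊥, ⊤, trivial⟩))))
  have hEsub := hinter.symm ▸ subset_biIdealClosure E
  obtain ⟨C₀, hC₀, hC₀F, hEC₀⟩ :=
    exists_shade_subset_of_subset hE (hEsub.trans Set.inter_subset_left)
  obtain ⟨C, hC, hC₀C, hCF, hsup⟩ := hH.isBiIdeal.exists_finite_supClosed hC₀ hC₀F
  have hleft (a a' : A) (b : B) :
      (a, b) ∈ lowerClosure C → (a', b) ∈ lowerClosure C → (a ⊔ a', b) ∈ lowerClosure C := by
    rintro ⟨x, hx, hax, hbx⟩ ⟨y, hy, hay, hby⟩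
    exact ⟨_, hsup x hx y hy, sup_le_sup hax hay, le_inf hbx hby⟩
  have hEK := biIdealClosure_subset (F := E)
    (isBiIdeal_shade_subset (lowerClosure C).lower hleft) fun x hx => by
      rcases hEC₀ x hx with h | h
      · exact Or.inl h
      · exact (mem_botPairs_or_pt_eq_bot (hEsub hx).2).imp_right fun hpt =>
          ⟨hpt, fun b hb => Or.inr (lowerClosure_mono hC₀C (h b hb))⟩
  refine ⟨C, hC, subset_antisymm (fun x hx => ?_)
    (Set.union_subset hH.isBiIdeal.botPairs_subset (lowerClosure_min hCF hH.isBiIdeal.isLowerSet))⟩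
  obtain hxbot | hxt := ht hx
  · exact Or.inl hxbot
  obtain (h | h) | ⟨-, h⟩ := hEK (hinter.subset (mk_Iic_mem_inter hx hxt))
  · exact Or.inl (Or.inl h)
  · exact Or.inl (Or.inr (LowerSet.Iic_injective (congrArg Shadow.shade h)))
  · exact (h x.2 le_rfl).imp_left Or.inr

end Shadow

/-! ### Consequences of cappedness -/

section LocallyFinite

variable {A : Type*} [Lattice A] [OrderBot A]

theorem isBiIdeal_exists_le_toDual : IsBiIdeal A (WithBot Aᵒᵈ) (botPairs A (WithBot Aᵒᵈ) ∪
    {x | ∃ d : A, x.1 ≤ d ∧ x.2 ≤ OrderDual.toDual d}) := by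
  refine isBiIdeal_botPairs_union ?_ ?_ ?_
  · rintro x y hyx ⟨d, hd, hd'⟩
    exact ⟨d, hyx.1.trans hd, hyx.2.trans hd'⟩
  · rintro a b b' ⟨d, had, hbd⟩ ⟨e, hae, hbe⟩
    exact ⟨d ⊓ e, le_inf had hae, sup_le_sup hbd hbe⟩
  · rintro a a' b ⟨d, had, hbd⟩ ⟨e, hae, hbe⟩
    exact ⟨d ⊔ e, sup_le_sup had hae, le_inf hbd hbe⟩

theorem exists_finite_supClosed_infClosed_of_isCapped
    (h : ∀ I, IsFGBiIdeal A (WithBot Aᵒᵈ) I → IsCapped I) {F : Set A} (hF : F.Finite) :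
    ∃ S : Set A, F ⊆ S ∧ S.Finite ∧ SupClosed S ∧ InfClosed S := by
  let diag (a : A) : A × WithBot Aᵒᵈ := (a, (OrderDual.toDual a : Aᵒᵈ))
  have hH := isBiIdeal_biIdealClosure (diag '' F)
  have hinv : biIdealClosure (diag '' F) ⊆ _ :=
    biIdealClosure_subset isBiIdeal_exists_le_toDual <| by
      rintro _ ⟨a, -, rfl⟩
      exact Or.inr ⟨a, le_rfl, le_rfl⟩
  refine ⟨{s | diag s ∈ biIdealClosure (diag '' F)},
    fun a ha => subset_biIdealClosure _ ⟨a, ha, rfl⟩, ?_, fun s hs t ht => ?_, fun s hs t ht => ?_⟩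
  · obtain ⟨C, hC, hHC⟩ := h _ (isFGBiIdeal_biIdealClosure (hF.image diag))
    refine ((hC.image Prod.fst).insert ⊥).subset fun s hs => ?_
    obtain (hs | hs) | ⟨c, hc, hsc⟩ := hHC.subset hs
    · exact Or.inl hs
    · exact absurd hs WithBot.coe_ne_bot
    obtain (hbot | hbot) | ⟨d, hcd, hdc⟩ := hinv (hHC.symm.subset (Or.inr (subset_lowerClosure hc)))
    · exact Or.inl (le_bot_iff.1 (hsc.1.trans_eq hbot))
    · exact absurd (le_bot_iff.1 (hsc.2.trans_eq hbot)) WithBot.coe_ne_bot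
    · have hds : OrderDual.toDual s ≤ OrderDual.toDual d :=
        WithBot.coe_le_coe.1 (hsc.2.trans hdc)
      exact Or.inr ⟨c, hc, (hcd.trans (OrderDual.toDual_le_toDual.1 hds)).antisymm hsc.1⟩
  · have hanti {a b : A} (hab : a ≤ b) :
        ((OrderDual.toDual b : Aᵒᵈ) : WithBot Aᵒᵈ) ≤ OrderDual.toDual a := WithBot.coe_le_coe.2 hab
    exact hH.sup_left_mem (hH.mem_of_le le_rfl (hanti le_sup_left) hs)
      (hH.mem_of_le le_rfl (hanti le_sup_right) ht)
  · exact hH.sup_right_mem (hH.mem_of_le inf_le_left le_rfl hs)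
      (hH.mem_of_le inf_le_right le_rfl ht)

end LocallyFinite

section RankFun

/-- A *rank function*: it vanishes at `⊥`, and a join exceeds the rank of its arguments by at most
one. Rank functions are the second factor that shows (T) to be necessary: the pairs `(a, h)` with
`h a` finite form a bi-ideal, and `h a` counts join-dependency steps. -/
structure RankFun (A : Type*) [SemilatticeSup A] [OrderBot A] extends A →o ℕ∞ where
  map_bot' : toFun ⊥ = 0
  map_sup_le' (a b : A) : toFun (a ⊔ b) ≤ max (toFun a) (toFun b) + 1

namespace RankFun

variable {A : Type*} [SemilatticeSup A] [OrderBot A]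

instance : FunLike (RankFun A) A ℕ∞ where
  coe h := h.toFun
  coe_injective := by
    rintro ⟨h, _, _⟩ ⟨k, _, _⟩ hhk
    congr
    exact OrderHom.ext _ _ hhk

theorem map_bot (h : RankFun A) : h ⊥ = 0 := h.map_bot'

theorem monotone (h : RankFun A) : Monotone h := h.monotone'

theorem map_sup_le (h : RankFun A) (a b : A) : h (a ⊔ b) ≤ max (h a) (h b) + 1 :=
  h.map_sup_le' a b

noncomputable instance : PartialOrder (RankFun A) := PartialOrder.lift _ DFunLike.coe_injective

noncomputable instance : SupSet (RankFun A) where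
  sSup s :=
    { toFun a := ⨆ h ∈ s, h a
      monotone' _ _ hab := iSup₂_mono fun h _ => h.monotone hab
      map_bot' := by simp only [map_bot, ENat.iSup_zero]
      map_sup_le' a b := iSup₂_le fun h hs => (h.map_sup_le a b).trans <|
        add_le_add_left (max_le_max (le_biSup (fun k : RankFun A => k a) hs)
          (le_biSup (fun k : RankFun A => k b) hs)) 1 }

/-- Suprema are pointwise, but infima are not: the pointwise infimum of two rank functions may fail
the bound on joins. -/
noncomputable instance : CompleteLattice (RankFun A) :=
  completeLatticeOfSup _ fun _ => ⟨fun _ hs a => le_biSup (fun k : RankFun A => k a) hs,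
    fun _ hk a => iSup₂_le fun _ hs => hk hs a⟩

theorem sup_apply (h k : RankFun A) (a : A) : (h ⊔ k) a = max (h a) (k a) :=
  iSup_pair

theorem bot_apply (a : A) : (⊥ : RankFun A) a = 0 :=
  iSup_emptyset

theorem isBiIdeal_apply_lt_top : IsBiIdeal A (RankFun A) {x | x.2 x.1 < ⊤} := by
  refine ⟨fun x y hxy hxy' hy => ?_, ?_, fun a h k hh hk => ?_, fun a b h ha hb => ?_⟩
  · exact ((x.2.monotone hxy).trans (hxy' y.1)).trans_lt hy
  · rintro ⟨a, h⟩ (rfl | rfl)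
    · exact h.map_bot.trans_lt ENat.top_pos
    · exact (bot_apply a).trans_lt ENat.top_pos
  · exact (sup_apply h k a).trans_lt (max_lt hh hk)
  · exact (h.map_sup_le a b).trans_lt (ENat.add_lt_top.2 ⟨max_lt ha hb, ENat.one_lt_top⟩)

open scoped Classical in
/-- The rank function equal to `0` on `↓a`, to `n` on the rest of `U`, and to `n + 1` elsewhere. -/
noncomputable def threshold (a : A) (U : LowerSet A) (n : ℕ∞) : RankFun A where
  toFun x := if x ≤ a then 0 else if x ∈ U then n else n + 1
  monotone' x y hxy := by
    by_cases hya : y ≤ a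
    · simp only [hxy.trans hya, hya, if_true, le_rfl]
    by_cases hyU : y ∈ U
    · have hxU : x ∈ U := U.lower hxy hyU
      simp only [hxU, hya, hyU, if_true, if_false]
      split_ifs
      exacts [zero_le, le_rfl]
    · simp only [hya, hyU, if_false]
      split_ifs
      exacts [zero_le, le_self_add, le_rfl]
  map_bot' := if_pos bot_le
  map_sup_le' x y := by
    have hn : n ≤ n + 1 + 1 := le_self_add.trans le_self_add
    by_cases hxy : x ⊔ y ≤ a
    · simp only [hxy, if_true, zero_le]
    rcases not_and_or.1 (mt sup_le_iff.2 hxy) with h | h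
    · simp only [h, hxy, if_false]
      split_ifs <;> simp [hn]
    · simp only [h, hxy, if_false]
      split_ifs <;> simp [hn]

variable {a x : A} {U : LowerSet A} {n : ℕ∞}

theorem threshold_of_le (h : x ≤ a) : threshold a U n x = 0 := if_pos h

theorem threshold_of_mem (h : ¬ x ≤ a) (hx : x ∈ U) : threshold a U n x = n :=
  (if_neg h).trans (if_pos hx)

theorem threshold_of_notMem (h : ¬ x ≤ a) (hx : x ∉ U) : threshold a U n x = n + 1 :=
  (if_neg h).trans (if_neg hx)

theorem threshold_le {h : RankFun A} (hU : ∀ x ∈ U, ¬ x ≤ a → n ≤ h x)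
    (hUc : ∀ x ∉ U, ¬ x ≤ a → n + 1 ≤ h x) : threshold a U n ≤ h := fun x => by
  by_cases hxa : x ≤ a
  · exact (threshold_of_le hxa).trans_le zero_le
  by_cases hx : x ∈ U
  · exact (threshold_of_mem hxa hx).trans_le (hU x hx hxa)
  · exact (threshold_of_notMem hxa hx).trans_le (hUc x hx hxa)

/-- The largest rank function vanishing at `a`: equal to `0` on `↓a` and to `⊤` elsewhere. -/
noncomputable def principal (a : A) : RankFun A := threshold a ⊥ ⊤

theorem principal_of_not_le (h : ¬ x ≤ a) : principal a x = ⊤ :=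
  (threshold_of_notMem h id).trans (top_add 1)

theorem le_principal {h : RankFun A} (ha : h a = 0) : h ≤ principal a := fun x => by
  by_cases hx : x ≤ a
  · exact ((h.monotone hx).trans_eq ha).trans (zero_le)
  · exact le_top.trans_eq (principal_of_not_le hx).symm

end RankFun

open RankFun

variable {K A : Type*} [Lattice K] [Lattice A] [OrderBot A]

theorem exists_mem_le_apply_of_forall_joinDep [Finite K] (f : LatticeHom K A)
    {H : Set (A × RankFun A)} (hH : IsBiIdeal A (RankFun A) H)
    (hprin : ∀ k, (f k, principal (f k)) ∈ H) {Z : Set K}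
    (hZ : ∀ p ∈ Z, ∃ j ∈ Z, JoinDep j p) (n : ℕ) {p : K} (hp : p ∈ Z) :
    ∃ h, (f p, h) ∈ H ∧ principal (f p) ≤ h ∧ ∀ x, (∀ s < p, ¬ x ≤ f s) → n ≤ h x := by
  induction n generalizing p with
  | zero => exact ⟨_, hprin p, le_rfl, fun x _ => by simp⟩
  | succ n ih =>
    obtain ⟨j, hjZ, I, hI, hj⟩ := hZ p hp
    obtain ⟨a, hpa, haI, haj⟩ := hI.exists_not_le hj
    obtain ⟨h, hhH, hjh, hnh⟩ := ih hjZ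
    let k := threshold (f a) (lowerClosure (f '' I)) n
    have hkh : k ≤ h := by
      refine threshold_le (fun x _ hxa => hnh x fun s hs hxs => ?_) fun x hx _ => ?_
      · exact hxa (hxs.trans (OrderHomClass.mono f (haj s hs)))
      · have hxj : ¬ x ≤ f j := fun hxj => hx ⟨f j, ⟨j, hj, rfl⟩, hxj⟩
        exact le_top.trans ((principal_of_not_le hxj).symm.trans_le (hjh x))
    have hkI : ∀ i ∈ I, (f i, k) ∈ H := fun i hi => by
      by_cases hij : i = j
      · exact hij ▸ hH.mem_of_le le_rfl hkh hhH
      · exact hH.mem_of_le le_rfl (le_principal (threshold_of_le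
          (OrderHomClass.mono f (haI i hi hij)))) (hprin i)
    refine ⟨principal (f p) ⊔ k, hH.sup_right_mem (hprin p)
      (SMinimalPair.mem_of_forall_mem hI f.toSupHom hH hkI), le_sup_left, fun x hx => ?_⟩
    have hnot {y : K} (hpy : ¬ p ≤ y) (hxp : x ≤ f p) : ¬ x ≤ f y := fun hxy =>
      hx (p ⊓ y) (inf_lt_left.2 hpy) ((le_inf hxp hxy).trans_eq (map_inf f p y).symm)
    rw [sup_apply]
    by_cases hxp : x ≤ f p
    · refine le_max_of_le_right (threshold_of_notMem (hnot hpa hxp) ?_).ge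
      rintro ⟨_, ⟨i, hi, rfl⟩, hxi⟩
      exact hnot ((sMinimalPair_iff.1 hI).2.2.1 i hi) hxp hxi
    · exact le_max_of_le_left (le_top.trans_eq (principal_of_not_le hxp).symm)

theorem condT_of_isCapped [Finite K] (h : ∀ I, IsFGBiIdeal A (RankFun A) I → IsCapped I)
    (f : LatticeHom K A) (hf : Function.Injective f) : CondT K := by
  by_contra hK
  rw [condT_iff_wellFounded_joinDep, WellFounded.wellFounded_iff_has_min] at hK
  push Not at hK
  obtain ⟨Z, ⟨p, hp⟩, hZ⟩ := hK
  have hle {x y : K} : f x ≤ f y → x ≤ y := fun hxy =>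
    inf_eq_left.1 (hf ((map_inf f x y).trans (inf_eq_left.2 hxy)))
  let F := Set.range fun k => (f k, principal (f k))
  obtain ⟨C, hC, hFC⟩ := h _ (isFGBiIdeal_biIdealClosure (F := F) (Set.finite_range _))
  have hfin : biIdealClosure F ⊆ {x | x.2 x.1 < ⊤} :=
    biIdealClosure_subset isBiIdeal_apply_lt_top <| Set.range_subset_iff.2 fun k =>
      (threshold_of_le le_rfl).trans_lt ENat.top_pos
  obtain ⟨N, hN⟩ : ∃ N : ℕ, ∀ c ∈ C, c.2 c.1 ≤ N := by
    have hlt : hC.toFinset.sup (fun c => c.2 c.1) < ⊤ :=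
      (Finset.sup_lt_iff ENat.top_pos).2 fun c hc =>
        hfin (hFC.symm.subset (Or.inr (subset_lowerClosure (hC.mem_toFinset.1 hc))))
    obtain ⟨N, hN⟩ := ENat.ne_top_iff_exists.1 hlt.ne
    exact ⟨N, fun c hc => (Finset.le_sup (f := fun c : A × RankFun A => c.2 c.1)
      (hC.mem_toFinset.2 hc)).trans_eq hN.symm⟩
  obtain ⟨k, hk, -, hlate⟩ := exists_mem_le_apply_of_forall_joinDep f
    (isBiIdeal_biIdealClosure F) (fun k => subset_biIdealClosure F ⟨k, rfl⟩) hZ (N + 1) hp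
  have hkp := hlate (f p) fun s hs hps => hs.not_ge (hle hps)
  obtain (hbot | rfl) | ⟨c, hc, hpc⟩ := hFC.subset hk
  · obtain ⟨j, -, hj⟩ := hZ p hp
    exact hj.right.1 fun z => hle (hbot.trans_le bot_le)
  · rw [bot_apply] at hkp
    exact absurd hkp (by simp)
  · have hle_N := (hkp.trans (hpc.2 (f p))).trans ((c.2.monotone hpc.1).trans (hN c hc))
    exact Nat.not_succ_le_self N (by exact_mod_cast hle_N)

end RankFun

/-- A lattice `A` with zero is amenable (for every lattice `B` with zero, the tensor
product `A ⊗ B` is a lattice) if and only if `A` is locally finite and every finite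
sublattice of `A` satisfies condition (T∨). -/
theorem amenable_iff_locallyFinite_and_condT (A : Type u) [Lattice A] [OrderBot A] :
    (∀ (B : Type u) [Lattice B] [OrderBot B], TensorIsLattice A B) ↔
    ((∀ F : Finset A, ∃ S : Set A, ↑F ⊆ S ∧ S.Finite ∧ SupClosed S ∧ InfClosed S) ∧
     (∀ (K : Type u) [Lattice K] [Fintype K] (f : K → A),
        Function.Injective f → (∀ x y, f (x ⊔ y) = f x ⊔ f y) →
        (∀ x y, f (x ⊓ y) = f x ⊓ f y) → CondT K)) := by
  constructor
  · intro h
    have hcap (B : Type u) [Lattice B] [OrderBot B] (I : Set (A × B))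
        (hI : IsFGBiIdeal A B I) : IsCapped I :=
      isCapped_of_tensorIsLattice_shadow (h (Shadow B)) hI
    refine ⟨fun F => exists_finite_supClosed_infClosed_of_isCapped (hcap _) F.finite_toSet,
      fun K _ _ f hinj hsup hinf => ?_⟩
    exact condT_of_isCapped (hcap _) (⟨⟨f, hsup⟩, hinf⟩ : LatticeHom K A) hinj
  · rintro ⟨hfin, hT⟩ B _ _
    refine tensorIsLattice_of_isCapped fun I hI => ?_
    obtain ⟨F, hF, rfl⟩ := isFGBiIdeal_iff.1 hI
    obtain ⟨S, hFS, hS, hsup, hinf⟩ :=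
      hfin ((hF.image Prod.fst).insert ⊥).toFinset
    rw [Set.Finite.coe_toFinset] at hFS
    let K : Sublattice A := ⟨S, hsup, hinf⟩
    have := hS.fintype
    have hK : CondT K := hT K K.subtype Subtype.val_injective (fun _ _ => rfl) fun _ _ => rfl
    exact isCapped_biIdealClosure_of_sublattice hK (hFS (Or.inl rfl)) hF
      fun x hx => hFS (Or.inr ⟨x, hx, rfl⟩)
end

section
/- For every lattice L, M₃⟨L⟩ is a lattice, and the diagonal map x ↦ (x,x,x) is an injective lattice homomorphism from L into M₃⟨L⟩ that is congruence-preserving: for every lattice congruence θ of L there is exactly one lattice congruence Θ of M₃⟨L⟩ such that Θ((x,x,x),(y,y,y)) holds if and only if θ(x,y) holds, for all x, y ∈ L. -/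
/-- A lattice congruence. -/
def LatCon (L : Type*) [Lattice L] (θ : L → L → Prop) : Prop :=
  Equivalence θ ∧
  ∀ a b c d : L, θ a b → θ c d → θ (a ⊔ c) (b ⊔ d) ∧ θ (a ⊓ c) (b ⊓ d)

/-- A lattice congruence on a poset (which is a lattice), expressed via least upper
bounds and greatest lower bounds. -/
def PosetLatCon {P : Type*} [PartialOrder P] (θ : P → P → Prop) : Prop :=
  Equivalence θ ∧
  (∀ a b c d s t : P, θ a b → θ c d → IsLUB {a, c} s → IsLUB {b, d} t → θ s t) ∧
  (∀ a b c d s t : P, θ a b → θ c d → IsGLB {a, c} s → IsGLB {b, d} t → θ s t)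

/-- `M₃⟨L⟩`: the Boolean triples of `L`, with the componentwise order. -/
abbrev M3Angle (L : Type*) [Lattice L] :=
  {t : L × L × L // ∃ u v w : L, t = (v ⊓ w, u ⊓ w, u ⊓ v)}

/-- The diagonal map `x ↦ (x, x, x)`. -/
def diag (L : Type*) [Lattice L] (x : L) : M3Angle L :=
  ⟨(x, x, x), x, x, x, by simp⟩

/-!
Send `(a, b, c)` to the triple `(v ⊓ w, u ⊓ w, u ⊓ v)` with `u = b ⊔ c`, `v = a ⊔ c`, `w = a ⊔ b`.
This is a closure operator on `L³` whose closed elements are the Boolean triples, so `M₃⟨L⟩` is a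
lattice in which meets are componentwise and joins are closures of componentwise joins. Both
operations are given by lattice polynomials, hence `θ³` restricts to a congruence of `M₃⟨L⟩`.

Conversely, a congruence of `M₃⟨L⟩` is determined by its restriction to the diagonal. Given two
Boolean triples, choose `o` below and `i` above all their components; these replace the bounds
that `L` may lack. Then `(a, a, a)` is obtained from `(a, b, c)` by a polynomial with
parameters `(i, o, o)`, `(o, i, o)`, `(o, o, i)`: the meet with `(i, o, o)` is `(a, o, o)`, its
joins with the other two parameters are `(a, i, a)` and `(a, a, i)`, and their meet is `(a, a, a)`;
the other components are similar. In the other direction, `(a, b, c)` is the join of the meets of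
`(a, a, a)`, `(b, b, b)`, `(c, c, c)` with the respective parameters.
-/

namespace LatCon

variable {L : Type*} [Lattice L] {θ : L → L → Prop} {a b c d : L}

theorem sup (hθ : LatCon L θ) (hab : θ a b) (hcd : θ c d) : θ (a ⊔ c) (b ⊔ d) :=
  (hθ.2 a b c d hab hcd).1

theorem inf (hθ : LatCon L θ) (hab : θ a b) (hcd : θ c d) : θ (a ⊓ c) (b ⊓ d) :=
  (hθ.2 a b c d hab hcd).2

theorem sup_right (hθ : LatCon L θ) (hab : θ a b) (c : L) : θ (a ⊔ c) (b ⊔ c) :=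
  hθ.sup hab (hθ.1.refl c)

theorem inf_right (hθ : LatCon L θ) (hab : θ a b) (c : L) : θ (a ⊓ c) (b ⊓ c) :=
  hθ.inf hab (hθ.1.refl c)

end LatCon

theorem posetLatCon_iff_latCon {P : Type*} [Lattice P] {θ : P → P → Prop} :
    PosetLatCon θ ↔ LatCon P θ := by
  constructor
  · rintro ⟨hequiv, hlub, hglb⟩
    exact ⟨hequiv, fun _ _ _ _ hab hcd =>
      ⟨hlub _ _ _ _ _ _ hab hcd isLUB_pair isLUB_pair,
        hglb _ _ _ _ _ _ hab hcd isGLB_pair isGLB_pair⟩⟩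
  · intro hθ
    refine ⟨hθ.1, fun a b c d s t hab hcd hs ht => ?_, fun a b c d s t hab hcd hs ht => ?_⟩
    · rw [hs.unique isLUB_pair, ht.unique isLUB_pair]
      exact hθ.sup hab hcd
    · rw [hs.unique isGLB_pair, ht.unique isGLB_pair]
      exact hθ.inf hab hcd

namespace M3Angle

variable {L : Type*} [Lattice L]

/-- The Boolean closure of a triple: the least Boolean triple above it. -/
def booleanClosure (t : L × L × L) : M3Angle L :=
  ⟨_, t.2.1 ⊔ t.2.2, t.1 ⊔ t.2.2, t.1 ⊔ t.2.1, rfl⟩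

theorem gc_booleanClosure :
    GaloisConnection booleanClosure (Subtype.val : M3Angle L → L × L × L) := by
  rintro ⟨a, b, c⟩ ⟨_, u, v, w, rfl⟩
  constructor
  · rintro ⟨ha, hb, hc⟩
    exact ⟨(le_inf le_sup_left le_sup_left).trans ha, (le_inf le_sup_left le_sup_right).trans hb,
      (le_inf le_sup_right le_sup_right).trans hc⟩
  · rintro ⟨ha, hb, hc⟩
    obtain ⟨hav, haw⟩ := le_inf_iff.1 ha
    obtain ⟨hbu, hbw⟩ := le_inf_iff.1 hb
    obtain ⟨hcu, hcv⟩ := le_inf_iff.1 hc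
    have hu : b ⊔ c ≤ u := sup_le hbu hcu
    have hv : a ⊔ c ≤ v := sup_le hav hcv
    have hw : a ⊔ b ≤ w := sup_le haw hbw
    exact ⟨inf_le_inf hv hw, inf_le_inf hu hw, inf_le_inf hu hv⟩

/-- Boolean closure and inclusion exhibit `M₃⟨L⟩` as the closed elements of `L³`; the lattice
structure is transported along this Galois insertion. -/
def giBooleanClosure : GaloisInsertion booleanClosure (Subtype.val : M3Angle L → L × L × L) :=
  gc_booleanClosure.toGaloisInsertion fun s => gc_booleanClosure.le_u_l s.1

instance : Lattice (M3Angle L) :=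
  giBooleanClosure.liftLattice

theorem coe_inf (s t : M3Angle L) : (s ⊓ t).1 = s.1 ⊓ t.1 :=
  gc_booleanClosure.u_inf

theorem sup_eq_booleanClosure (s t : M3Angle L) : s ⊔ t = booleanClosure (s.1 ⊔ t.1) :=
  (giBooleanClosure.l_sup_u s t).symm

theorem diag_injective : Function.Injective (diag L) :=
  fun _ _ h => congrArg (fun s : M3Angle L => s.1.1) h

theorem diag_sup (x y : L) : diag L (x ⊔ y) = diag L x ⊔ diag L y := by
  simp [sup_eq_booleanClosure, booleanClosure, diag]

theorem diag_inf (x y : L) : diag L (x ⊓ y) = diag L x ⊓ diag L y :=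
  Subtype.ext (coe_inf (diag L x) (diag L y)).symm

theorem exists_diag_le (s : M3Angle L) : ∃ o, diag L o ≤ s :=
  ⟨s.1.1 ⊓ (s.1.2.1 ⊓ s.1.2.2), inf_le_left, inf_le_right.trans inf_le_left,
    inf_le_right.trans inf_le_right⟩

theorem exists_le_diag (s : M3Angle L) : ∃ i, s ≤ diag L i :=
  ⟨s.1.1 ⊔ (s.1.2.1 ⊔ s.1.2.2), le_sup_left, le_sup_left.trans le_sup_right,
    le_sup_right.trans le_sup_right⟩

theorem exists_mem_Icc_diag (s t : M3Angle L) :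
    ∃ o i, s ∈ Set.Icc (diag L o) (diag L i) ∧ t ∈ Set.Icc (diag L o) (diag L i) := by
  obtain ⟨o, ho⟩ := exists_diag_le (s ⊓ t)
  obtain ⟨i, hi⟩ := exists_le_diag (s ⊔ t)
  rw [le_inf_iff] at ho
  rw [sup_le_iff] at hi
  exact ⟨o, i, ⟨ho.1, hi.1⟩, ⟨ho.2, hi.2⟩⟩

theorem sup_booleanClosure_components {o : L} {s : M3Angle L} (hs : diag L o ≤ s) :
    booleanClosure (s.1.1, o, o) ⊔ booleanClosure (o, s.1.2.1, o) ⊔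
      booleanClosure (o, o, s.1.2.2) = s := by
  obtain ⟨ha : o ≤ s.1.1, hb : o ≤ s.1.2.1, hc : o ≤ s.1.2.2⟩ := hs
  have hjoin : (s.1.1, o, o) ⊔ (o, s.1.2.1, o) ⊔ (o, o, s.1.2.2) = s.1 := by simp [*]
  rw [← gc_booleanClosure.l_sup, ← gc_booleanClosure.l_sup, hjoin]
  exact giBooleanClosure.l_u_eq s

section Interval

variable {o i a : L} {s : M3Angle L}

theorem diag_mem_Icc (ha : a ∈ Set.Icc o i) : diag L a ∈ Set.Icc (diag L o) (diag L i) :=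
  ⟨⟨ha.1, ha.1, ha.1⟩, ⟨ha.2, ha.2, ha.2⟩⟩

theorem components_mem_Icc (hs : s ∈ Set.Icc (diag L o) (diag L i)) :
    s.1.1 ∈ Set.Icc o i ∧ s.1.2.1 ∈ Set.Icc o i ∧ s.1.2.2 ∈ Set.Icc o i :=
  ⟨⟨hs.1.1, hs.2.1⟩, ⟨hs.1.2.1, hs.2.2.1⟩, ⟨hs.1.2.2, hs.2.2.2⟩⟩

theorem inf_booleanClosure_fst (hs : s ∈ Set.Icc (diag L o) (diag L i)) :
    s ⊓ booleanClosure (i, o, o) = booleanClosure (s.1.1, o, o) := by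
  obtain ⟨⟨ha, ha'⟩, ⟨hb, -⟩, ⟨hc, -⟩⟩ := components_mem_Icc hs
  have hoi : o ≤ i := ha.trans ha'
  exact Subtype.ext (by simp [coe_inf, booleanClosure, Prod.ext_iff, Prod.le_def, *])

theorem inf_booleanClosure_snd (hs : s ∈ Set.Icc (diag L o) (diag L i)) :
    s ⊓ booleanClosure (o, i, o) = booleanClosure (o, s.1.2.1, o) := by
  obtain ⟨⟨ha, -⟩, ⟨hb, hb'⟩, ⟨hc, -⟩⟩ := components_mem_Icc hs
  have hoi : o ≤ i := hb.trans hb'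
  exact Subtype.ext (by simp [coe_inf, booleanClosure, Prod.ext_iff, *])

theorem inf_booleanClosure_thd (hs : s ∈ Set.Icc (diag L o) (diag L i)) :
    s ⊓ booleanClosure (o, o, i) = booleanClosure (o, o, s.1.2.2) := by
  obtain ⟨⟨ha, -⟩, ⟨hb, -⟩, ⟨hc, hc'⟩⟩ := components_mem_Icc hs
  have hoi : o ≤ i := hc.trans hc'
  exact Subtype.ext (by simp [coe_inf, booleanClosure, Prod.ext_iff, *])

theorem diag_eq_inf_sup_fst (ha : a ∈ Set.Icc o i) :
    diag L a = (booleanClosure (a, o, o) ⊔ booleanClosure (o, i, o)) ⊓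
      (booleanClosure (a, o, o) ⊔ booleanClosure (o, o, i)) := by
  obtain ⟨hoa, hai⟩ := ha
  have hoi : o ≤ i := hoa.trans hai
  exact Subtype.ext (by simp [sup_eq_booleanClosure, coe_inf, booleanClosure, diag, *])

theorem diag_eq_inf_sup_snd (ha : a ∈ Set.Icc o i) :
    diag L a = (booleanClosure (o, a, o) ⊔ booleanClosure (i, o, o)) ⊓
      (booleanClosure (o, a, o) ⊔ booleanClosure (o, o, i)) := by
  obtain ⟨hoa, hai⟩ := ha
  have hoi : o ≤ i := hoa.trans hai
  exact Subtype.ext (by simp [sup_eq_booleanClosure, coe_inf, booleanClosure, diag, *])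

theorem diag_eq_inf_sup_thd (ha : a ∈ Set.Icc o i) :
    diag L a = (booleanClosure (o, o, a) ⊔ booleanClosure (i, o, o)) ⊓
      (booleanClosure (o, o, a) ⊔ booleanClosure (o, i, o)) := by
  obtain ⟨hoa, hai⟩ := ha
  have hoi : o ≤ i := hoa.trans hai
  exact Subtype.ext (by simp [sup_eq_booleanClosure, coe_inf, booleanClosure, diag, *])

end Interval

/-- The restriction of `θ³` to `M₃⟨L⟩`; when `θ` is a congruence of `L`, this is the congruence
of `M₃⟨L⟩` extending it. -/
def Componentwise (θ : L → L → Prop) (s t : M3Angle L) : Prop :=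
  θ s.1.1 t.1.1 ∧ θ s.1.2.1 t.1.2.1 ∧ θ s.1.2.2 t.1.2.2

theorem componentwise_diag {θ : L → L → Prop} {x y : L} :
    Componentwise θ (diag L x) (diag L y) ↔ θ x y := by
  simp only [Componentwise, diag, and_self]

theorem latCon_componentwise {θ : L → L → Prop} (hθ : LatCon L θ) :
    LatCon (M3Angle L) (Componentwise θ) := by
  have hequiv := hθ.1
  refine ⟨⟨fun s => ⟨hequiv.refl _, hequiv.refl _, hequiv.refl _⟩,
    fun h => ⟨hequiv.symm h.1, hequiv.symm h.2.1, hequiv.symm h.2.2⟩,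
    fun h k => ⟨hequiv.trans h.1 k.1, hequiv.trans h.2.1 k.2.1, hequiv.trans h.2.2 k.2.2⟩⟩, ?_⟩
  rintro s t s' t' ⟨ha, hb, hc⟩ ⟨ha', hb', hc'⟩
  constructor
  · simp only [sup_eq_booleanClosure]
    have hu := hθ.sup (hθ.sup hb hb') (hθ.sup hc hc')
    have hv := hθ.sup (hθ.sup ha ha') (hθ.sup hc hc')
    have hw := hθ.sup (hθ.sup ha ha') (hθ.sup hb hb')
    exact ⟨hθ.inf hv hw, hθ.inf hu hw, hθ.inf hu hv⟩
  · simp only [Componentwise, coe_inf]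
    exact ⟨hθ.inf ha ha', hθ.inf hb hb', hθ.inf hc hc'⟩

section Congruence

variable {Φ : M3Angle L → M3Angle L → Prop} {o i a b : L} {s t : M3Angle L}

theorem rel_iff_rel_booleanClosure_components (hΦ : LatCon (M3Angle L) Φ)
    (hs : s ∈ Set.Icc (diag L o) (diag L i)) (ht : t ∈ Set.Icc (diag L o) (diag L i)) :
    Φ s t ↔ Φ (booleanClosure (s.1.1, o, o)) (booleanClosure (t.1.1, o, o)) ∧
      Φ (booleanClosure (o, s.1.2.1, o)) (booleanClosure (o, t.1.2.1, o)) ∧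
      Φ (booleanClosure (o, o, s.1.2.2)) (booleanClosure (o, o, t.1.2.2)) := by
  constructor
  · intro h
    simp only [← inf_booleanClosure_fst hs, ← inf_booleanClosure_fst ht,
      ← inf_booleanClosure_snd hs, ← inf_booleanClosure_snd ht,
      ← inf_booleanClosure_thd hs, ← inf_booleanClosure_thd ht]
    exact ⟨hΦ.inf_right h _, hΦ.inf_right h _, hΦ.inf_right h _⟩
  · rintro ⟨hfst, hsnd, hthd⟩
    rw [← sup_booleanClosure_components hs.1, ← sup_booleanClosure_components ht.1]
    exact hΦ.sup (hΦ.sup hfst hsnd) hthd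

theorem rel_booleanClosure_fst_iff (hΦ : LatCon (M3Angle L) Φ) (ha : a ∈ Set.Icc o i)
    (hb : b ∈ Set.Icc o i) :
    Φ (booleanClosure (a, o, o)) (booleanClosure (b, o, o)) ↔ Φ (diag L a) (diag L b) := by
  constructor
  · intro h
    rw [diag_eq_inf_sup_fst ha, diag_eq_inf_sup_fst hb]
    exact hΦ.inf (hΦ.sup_right h _) (hΦ.sup_right h _)
  · intro h
    exact ((rel_iff_rel_booleanClosure_components hΦ (diag_mem_Icc ha) (diag_mem_Icc hb)).1 h).1

theorem rel_booleanClosure_snd_iff (hΦ : LatCon (M3Angle L) Φ) (ha : a ∈ Set.Icc o i)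
    (hb : b ∈ Set.Icc o i) :
    Φ (booleanClosure (o, a, o)) (booleanClosure (o, b, o)) ↔ Φ (diag L a) (diag L b) := by
  constructor
  · intro h
    rw [diag_eq_inf_sup_snd ha, diag_eq_inf_sup_snd hb]
    exact hΦ.inf (hΦ.sup_right h _) (hΦ.sup_right h _)
  · intro h
    exact ((rel_iff_rel_booleanClosure_components hΦ (diag_mem_Icc ha) (diag_mem_Icc hb)).1 h).2.1

theorem rel_booleanClosure_thd_iff (hΦ : LatCon (M3Angle L) Φ) (ha : a ∈ Set.Icc o i)
    (hb : b ∈ Set.Icc o i) :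
    Φ (booleanClosure (o, o, a)) (booleanClosure (o, o, b)) ↔ Φ (diag L a) (diag L b) := by
  constructor
  · intro h
    rw [diag_eq_inf_sup_thd ha, diag_eq_inf_sup_thd hb]
    exact hΦ.inf (hΦ.sup_right h _) (hΦ.sup_right h _)
  · intro h
    exact ((rel_iff_rel_booleanClosure_components hΦ (diag_mem_Icc ha) (diag_mem_Icc hb)).1 h).2.2

theorem rel_iff_componentwise_diag (hΦ : LatCon (M3Angle L) Φ) (s t : M3Angle L) :
    Φ s t ↔ Componentwise (fun x y => Φ (diag L x) (diag L y)) s t := by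
  obtain ⟨o, i, hs, ht⟩ := exists_mem_Icc_diag s t
  obtain ⟨hsa, hsb, hsc⟩ := components_mem_Icc hs
  obtain ⟨hta, htb, htc⟩ := components_mem_Icc ht
  rw [rel_iff_rel_booleanClosure_components hΦ hs ht, rel_booleanClosure_fst_iff hΦ hsa hta,
    rel_booleanClosure_snd_iff hΦ hsb htb, rel_booleanClosure_thd_iff hΦ hsc htc, Componentwise]

theorem eq_componentwise {θ : L → L → Prop} (hΦ : LatCon (M3Angle L) Φ)
    (hdiag : ∀ x y, Φ (diag L x) (diag L y) ↔ θ x y) : Φ = Componentwise θ := by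
  funext s t
  simp only [rel_iff_componentwise_diag hΦ s t, hdiag]

end Congruence

end M3Angle

/-- `M₃⟨L⟩` is a lattice, and the diagonal map is an injective lattice homomorphism
from `L` into `M₃⟨L⟩` that is congruence-preserving. -/
theorem M3Angle_lattice_and_diag_congruencePreserving (L : Type*) [Lattice L] :
    (∀ s t : M3Angle L, (∃ z, IsLUB {s, t} z) ∧ (∃ w, IsGLB {s, t} w)) ∧
    Function.Injective (diag L) ∧
    (∀ x y : L, IsLUB {diag L x, diag L y} (diag L (x ⊔ y)) ∧
                IsGLB {diag L x, diag L y} (diag L (x ⊓ y))) ∧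
    (∀ θ : L → L → Prop, LatCon L θ →
      ∃! Θ : M3Angle L → M3Angle L → Prop,
        PosetLatCon Θ ∧ ∀ x y : L, (Θ (diag L x) (diag L y) ↔ θ x y)) := by
  refine ⟨fun s t => ⟨⟨s ⊔ t, isLUB_pair⟩, s ⊓ t, isGLB_pair⟩, M3Angle.diag_injective,
    fun x y => ?_, fun θ hθ =>
      ⟨M3Angle.Componentwise θ, ⟨?_, fun x y => M3Angle.componentwise_diag⟩, ?_⟩⟩
  · rw [M3Angle.diag_sup, M3Angle.diag_inf]
    exact ⟨isLUB_pair, isGLB_pair⟩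
  · exact posetLatCon_iff_latCon.2 (M3Angle.latCon_componentwise hθ)
  · rintro Φ ⟨hΦ, hdiag⟩
    exact M3Angle.eq_componentwise (posetLatCon_iff_latCon.1 hΦ) hdiag
end

section
/- For every lattice L, the poset N₅⟨L⟩ is a lattice. -/
/-!
If `(x, y, z) ≤ (v ⊓ w, u ⊓ w, v)`, then `x ⊔ z ≤ v` and `x ⊔ y ≤ w`. Hence among the members of
`N₅⟨L⟩` above a given triple there is a least one, obtained from `u = y`, `v = x ⊔ z` and
`w = x ⊔ y`. So `N₅⟨L⟩` is the set of closed elements of a closure operator on the lattice `L³`: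
meets are componentwise, and joins are closures of componentwise joins.
-/

/-- `N₅⟨L⟩ = {(v ∧ w, u ∧ w, v) : u, v, w ∈ L}`, with the componentwise order. -/
abbrev N5Angle (L : Type*) [Lattice L] :=
  {t : L × L × L // ∃ u v w : L, t = (v ⊓ w, u ⊓ w, v)}

namespace N5Angle

variable {L : Type*} [Lattice L]

/-- The closure of a triple in `N₅⟨L⟩`: the least member of `N₅⟨L⟩` above it. -/
def closure : L × L × L → N5Angle L
  | (x, y, z) => ⟨((x ⊔ z) ⊓ (x ⊔ y), y, x ⊔ z), y, x ⊔ z, x ⊔ y,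
      by rw [inf_eq_left.2 (le_sup_right : y ≤ x ⊔ y)]⟩

theorem le_closure (t : L × L × L) : t ≤ closure t :=
  ⟨le_inf le_sup_left le_sup_left, le_rfl, le_sup_right⟩

theorem closure_le {t : L × L × L} {s : N5Angle L} (h : t ≤ s) : closure t ≤ s := by
  obtain ⟨x, y, z⟩ := t
  obtain ⟨_, u, v, w, rfl⟩ := s
  obtain ⟨hx : x ≤ v ⊓ w, hy : y ≤ u ⊓ w, hz : z ≤ v⟩ := h
  have hv : x ⊔ z ≤ v := sup_le (le_inf_iff.1 hx).1 hz
  have hw : x ⊔ y ≤ w := sup_le (le_inf_iff.1 hx).2 (le_inf_iff.1 hy).2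
  exact ⟨inf_le_inf hv hw, hy, hv⟩

theorem gc_closure_val : GaloisConnection (closure (L := L)) Subtype.val :=
  fun t _ => ⟨fun h => (le_closure t).trans h, closure_le⟩

/-- The lattice structure on `N₅⟨L⟩` extending the componentwise order. It is not an
instance, so that the order on `N5Angle L` is always inferred from the subtype. -/
abbrev lattice : Lattice (N5Angle L) :=
  (gc_closure_val.toGaloisInsertion fun s => le_closure s.val).liftLattice

end N5Angle

/-- For every lattice `L`, the poset `N₅⟨L⟩` is a lattice: every pair of elements
has a least upper bound and a greatest lower bound. -/
theorem N5Angle_isLattice (L : Type*) [Lattice L] :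
    ∀ s t : N5Angle L, (∃ z, IsLUB {s, t} z) ∧ (∃ w, IsGLB {s, t} w) := by
  let _ : Lattice (N5Angle L) := N5Angle.lattice
  exact fun s t => ⟨⟨s ⊔ t, isLUB_pair⟩, ⟨s ⊓ t, isGLB_pair⟩⟩
end

section
/- Let A and B be lattices. Then A ⊡ B is a sublattice of the powerset lattice of A × B (i.e., it is closed under binary unions and binary intersections), and A □ B is a closure system in A ⊡ B: every H ∈ A ⊡ B is contained in a least element of A □ B. In particular, A □ B, ordered by inclusion, is a lattice, in which binary meets are given by intersection. -/
/-!
`A ⊡ B` is generated by the boxes `a □ b` under the operations `H ∪ K` and `H ∪ (c ∘ d)`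
(`boxDot_induction`). Closure under intersection follows by distributivity from
`(a □ b) ∩ (c □ d) = ((a ⊓ c) □ (b ⊓ d)) ∪ ((a ∘ d) ∪ (c ∘ b))` and
`(a □ b) ∩ (c ∘ d) = ((a ⊓ c) ∘ d) ∪ (c ∘ (b ⊓ d))`.

A box `u □ v ≠ A × B` contains `a □ b` iff `a ≤ u` and `b ≤ v`, and it contains `c ∘ d` iff `c ≤ u`
or `d ≤ v`. Hence for each `H ∈ A ⊡ B` there are finitely many corners such that the boxes above
`H`, apart from `A × B`, are those with corner above one of them: `(a, b)` does for `a □ b`, and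
adjoining `c ∘ d` to `H` replaces each corner `(a, b)` by the two corners `(a ⊔ c, b)` and
`(a, b ⊔ d)`. The intersection of the boxes with these corners is the closure of `H`, and joins in
`A □ B` are closures of unions.
-/

variable (A B : Type*) [Lattice A] [Lattice B]

/-- `a □ b = {(x,y) : x ≤ a or y ≤ b}`. -/
def boxe (a : A) (b : B) : Set (A × B) := {p | p.1 ≤ a ∨ p.2 ≤ b}

/-- `c ∘ d = {(x,y) : x ≤ c and y ≤ d}`. -/
def circ (c : A) (d : B) : Set (A × B) := {p | p.1 ≤ c ∧ p.2 ≤ d}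

/-- The box product `A □ B`: all finite nonempty intersections `⋂ (aᵢ □ bᵢ)`. -/
def boxProd : Set (Set (A × B)) :=
  {H | ∃ F : Finset (A × B), F.Nonempty ∧ H = ⋂ p ∈ F, boxe A B p.1 p.2}

/-- `A ⊡ B`: all finite unions `⋃_{i<m} (aᵢ □ bᵢ) ∪ ⋃_{j<n} (cⱼ ∘ dⱼ)` with `m ≥ 1`. -/
def boxDot : Set (Set (A × B)) :=
  {H | ∃ F G : Finset (A × B), F.Nonempty ∧
      H = (⋃ p ∈ F, boxe A B p.1 p.2) ∪ ⋃ p ∈ G, circ A B p.1 p.2}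

section SubsetLattice

variable {α : Type*} {s : Set α}

theorem isLUB_pair_of_isLeast [SemilatticeSup α] {x y : s} {z : α}
    (hz : IsLeast {w | w ∈ s ∧ (x ⊔ y : α) ≤ w} z) : IsLUB {x, y} (⟨z, hz.1.1⟩ : s) := by
  have le_iff (w : s) : z ≤ w ↔ x ≤ w ∧ y ≤ w :=
    ⟨fun h => sup_le_iff.1 (hz.1.2.trans h), fun h => hz.2 ⟨w.2, sup_le h.1 h.2⟩⟩
  rw [isLUB_iff_le_iff]
  intro w
  rw [upperBounds_insert, upperBounds_singleton]
  exact le_iff w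

theorem isGLB_pair_of_infClosed [SemilatticeInf α] (hs : InfClosed s) (x y : s) :
    IsGLB {x, y} (⟨x ⊓ y, hs x.2 y.2⟩ : s) := by
  rw [isGLB_iff_le_iff]
  intro w
  rw [lowerBounds_insert, lowerBounds_singleton]
  exact le_inf_iff

end SubsetLattice

section BoxProduct

variable {A B}

theorem mem_boxe {a : A} {b : B} {x : A × B} : x ∈ boxe A B a b ↔ x.1 ≤ a ∨ x.2 ≤ b :=
  Iff.rfl

theorem mem_circ {c : A} {d : B} {x : A × B} : x ∈ circ A B c d ↔ x.1 ≤ c ∧ x.2 ≤ d :=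
  Iff.rfl

theorem boxe_inter_boxe (a c : A) (b d : B) :
    boxe A B a b ∩ boxe A B c d =
      boxe A B (a ⊓ c) (b ⊓ d) ∪ (circ A B a d ∪ circ A B c b) := by
  ext x
  simp only [Set.mem_inter_iff, Set.mem_union, mem_boxe, mem_circ, le_inf_iff]
  tauto

theorem boxe_inter_circ (a c : A) (b d : B) :
    boxe A B a b ∩ circ A B c d = circ A B (a ⊓ c) d ∪ circ A B c (b ⊓ d) := by
  ext x
  simp only [Set.mem_inter_iff, Set.mem_union, mem_boxe, mem_circ, le_inf_iff]
  tauto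

theorem circ_inter_circ (a c : A) (b d : B) :
    circ A B a b ∩ circ A B c d = circ A B (a ⊓ c) (b ⊓ d) := by
  ext x
  simp only [Set.mem_inter_iff, mem_circ, le_inf_iff]
  tauto

theorem boxe_mem_boxDot (a : A) (b : B) : boxe A B a b ∈ boxDot A B :=
  ⟨{(a, b)}, ∅, Finset.singleton_nonempty _, by simp⟩

theorem supClosed_boxDot : SupClosed (boxDot A B) := by
  classical
  rintro _ ⟨F, G, hF, rfl⟩ _ ⟨F', G', -, rfl⟩
  refine ⟨F ∪ F', G ∪ G', hF.mono Finset.subset_union_left, ?_⟩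
  rw [Finset.set_biUnion_union, Finset.set_biUnion_union]
  exact sup_sup_sup_comm ..

theorem union_circ_mem_boxDot {H : Set (A × B)} (hH : H ∈ boxDot A B) (c : A) (d : B) :
    H ∪ circ A B c d ∈ boxDot A B := by
  classical
  obtain ⟨F, G, hF, rfl⟩ := hH
  refine ⟨F, insert (c, d) G, hF, ?_⟩
  rw [Finset.set_biUnion_insert, Set.union_assoc, Set.union_comm (circ A B c d)]

@[elab_as_elim]
theorem boxDot_induction {motive : (H : Set (A × B)) → H ∈ boxDot A B → Prop}
    (box : ∀ a b, motive (boxe A B a b) (boxe_mem_boxDot a b))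
    (union : ∀ H K hH hK, motive H hH → motive K hK → motive (H ∪ K) (supClosed_boxDot hH hK))
    (union_circ : ∀ H c d hH, motive H hH →
      motive (H ∪ circ A B c d) (union_circ_mem_boxDot hH c d))
    {H : Set (A × B)} (hH : H ∈ boxDot A B) : motive H hH := by
  classical
  suffices ∃ h, motive H h from this.2
  obtain ⟨F, G, hF, rfl⟩ := hH
  induction G using Finset.induction_on with
  | empty =>
    simp only [Finset.notMem_empty, Set.iUnion_of_empty, Set.iUnion_empty, Set.union_empty]
    induction hF using Finset.Nonempty.cons_induction with
    | singleton p =>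
      rw [Finset.set_biUnion_singleton]
      exact ⟨boxe_mem_boxDot p.1 p.2, box p.1 p.2⟩
    | cons p F _ _ ih =>
      obtain ⟨hF, ih⟩ := ih
      rw [Finset.cons_eq_insert, Finset.set_biUnion_insert]
      exact ⟨supClosed_boxDot (boxe_mem_boxDot p.1 p.2) hF, union _ _ _ _ (box p.1 p.2) ih⟩
  | insert p G _ ih =>
    obtain ⟨hFG, ih⟩ := ih
    rw [Finset.set_biUnion_insert, Set.union_comm (circ A B _ _), ← Set.union_assoc]
    exact ⟨union_circ_mem_boxDot hFG p.1 p.2, union_circ _ p.1 p.2 _ ih⟩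

theorem boxe_inter_mem_boxDot (a : A) (b : B) {K : Set (A × B)} (hK : K ∈ boxDot A B) :
    boxe A B a b ∩ K ∈ boxDot A B := by
  induction hK using boxDot_induction with
  | box c d =>
    rw [boxe_inter_boxe, ← Set.union_assoc]
    exact union_circ_mem_boxDot (union_circ_mem_boxDot (boxe_mem_boxDot _ _) _ _) _ _
  | union K L _ _ ihK ihL =>
    rw [Set.inter_union_distrib_left]
    exact supClosed_boxDot ihK ihL
  | union_circ K c d _ ih =>
    rw [Set.inter_union_distrib_left, boxe_inter_circ, ← Set.union_assoc]
    exact union_circ_mem_boxDot (union_circ_mem_boxDot ih _ _) _ _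

theorem union_circ_inter_mem_boxDot {H K : Set (A × B)} (hH : H ∈ boxDot A B)
    (hK : K ∈ boxDot A B) (c : A) (d : B) : H ∪ circ A B c d ∩ K ∈ boxDot A B := by
  induction hK using boxDot_induction generalizing H with
  | box a b =>
    rw [Set.inter_comm, boxe_inter_circ, ← Set.union_assoc]
    exact union_circ_mem_boxDot (union_circ_mem_boxDot hH _ _) _ _
  | union K L _ _ ihK ihL =>
    rw [Set.inter_union_distrib_left, ← Set.union_assoc]
    exact ihL (ihK hH)
  | union_circ K a b _ ih =>
    rw [Set.inter_union_distrib_left, circ_inter_circ, ← Set.union_assoc]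
    exact union_circ_mem_boxDot (ih hH) _ _

theorem infClosed_boxDot : InfClosed (boxDot A B) := by
  intro H hH K hK
  change H ∩ K ∈ boxDot A B
  induction hH using boxDot_induction with
  | box a b => exact boxe_inter_mem_boxDot a b hK
  | union H L _ _ ihH ihL =>
    rw [Set.union_inter_distrib_right]
    exact supClosed_boxDot ihH ihL
  | union_circ H c d _ ih =>
    rw [Set.union_inter_distrib_right]
    exact union_circ_inter_mem_boxDot ih hK c d

theorem infClosed_boxProd : InfClosed (boxProd A B) := by
  classical
  rintro _ ⟨F, hF, rfl⟩ _ ⟨F', -, rfl⟩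
  exact ⟨F ∪ F', hF.mono Finset.subset_union_left, (Finset.set_biInter_inter ..).symm⟩

theorem boxProd_subset_boxDot : boxProd A B ⊆ boxDot A B := by
  rintro _ ⟨F, hF, rfl⟩
  exact infClosed_boxDot.biInf_mem_of_nonempty F.finite_toSet hF fun p _ => boxe_mem_boxDot p.1 p.2

theorem boxe_subset_boxe_iff {a u : A} {b v : B} (huv : boxe A B u v ≠ Set.univ) :
    boxe A B a b ⊆ boxe A B u v ↔ a ≤ u ∧ b ≤ v := by
  refine ⟨fun h => ?_, fun h x => Or.imp (le_trans · h.1) (le_trans · h.2)⟩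
  obtain ⟨⟨x, y⟩, hxy⟩ := (Set.ne_univ_iff_exists_notMem _).1 huv
  obtain ⟨hx, hy⟩ := not_or.1 hxy
  have hay : (a, y) ∈ boxe A B u v := h (Or.inl le_rfl)
  have hxb : (x, b) ∈ boxe A B u v := h (Or.inr le_rfl)
  exact ⟨hay.resolve_right hy, hxb.resolve_left hx⟩

theorem circ_subset_boxe_iff {c u : A} {d v : B} :
    circ A B c d ⊆ boxe A B u v ↔ c ≤ u ∨ d ≤ v :=
  ⟨fun h => @h (c, d) ⟨le_rfl, le_rfl⟩, fun h _ hx => h.imp hx.1.trans hx.2.trans⟩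

/-- `E` is a nonempty finite set of corners generating the boxes above `H`: a box `u □ v` other
than `A × B` contains `H` iff `(u, v)` is above some member of `E`. The box `A × B` is exempted
because some of its corners `(u, v)` may lie above no member of `E`. The closure of `H` in `A □ B`
is the intersection of the boxes with corners in `E`. -/
structure IsBoxBasis (H : Set (A × B)) (E : Finset (A × B)) : Prop where
  nonempty : E.Nonempty
  subset_boxe_iff {u : A} {v : B} (huv : boxe A B u v ≠ Set.univ) :
    H ⊆ boxe A B u v ↔ ∃ p ∈ E, p ≤ (u, v)

variable {H K : Set (A × B)} {E F : Finset (A × B)}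

theorem isBoxBasis_boxe (a : A) (b : B) : IsBoxBasis (boxe A B a b) {(a, b)} where
  nonempty := Finset.singleton_nonempty _
  subset_boxe_iff huv := by
    rw [boxe_subset_boxe_iff huv]
    simp only [Finset.mem_singleton, exists_eq_left, Prod.mk_le_mk]

open scoped FinsetFamily in
theorem IsBoxBasis.union [DecidableEq A] [DecidableEq B] (hH : IsBoxBasis H E)
    (hK : IsBoxBasis K F) : IsBoxBasis (H ∪ K) (E ⊻ F) where
  nonempty := hH.nonempty.sups hK.nonempty
  subset_boxe_iff huv := by
    rw [Set.union_subset_iff, hH.subset_boxe_iff huv, hK.subset_boxe_iff huv]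
    constructor
    · rintro ⟨⟨p, hp, hpw⟩, ⟨q, hq, hqw⟩⟩
      exact ⟨p ⊔ q, Finset.sup_mem_sups hp hq, sup_le hpw hqw⟩
    · rintro ⟨r, hr, hrw⟩
      obtain ⟨p, hp, q, hq, rfl⟩ := Finset.mem_sups.1 hr
      exact ⟨⟨p, hp, le_sup_left.trans hrw⟩, ⟨q, hq, le_sup_right.trans hrw⟩⟩

theorem IsBoxBasis.union_circ [DecidableEq A] [DecidableEq B] (hH : IsBoxBasis H E)
    (c : A) (d : B) :
    IsBoxBasis (H ∪ circ A B c d)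
      (E.image (fun p => (p.1 ⊔ c, p.2)) ∪ E.image (fun p => (p.1, p.2 ⊔ d))) where
  nonempty := (hH.nonempty.image _).mono Finset.subset_union_left
  subset_boxe_iff huv := by
    rw [Set.union_subset_iff, hH.subset_boxe_iff huv, circ_subset_boxe_iff]
    simp only [Finset.mem_union, or_and_right, exists_or, Finset.exists_mem_image, Prod.le_def,
      sup_le_iff]
    grind

theorem IsBoxBasis.isLeast (hH : IsBoxBasis H E) :
    IsLeast {K | K ∈ boxProd A B ∧ H ⊆ K} (⋂ p ∈ E, boxe A B p.1 p.2) := by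
  refine ⟨⟨⟨E, hH.nonempty, rfl⟩, Set.subset_iInter₂ fun p hp => ?_⟩, ?_⟩
  · by_cases hpu : boxe A B p.1 p.2 = Set.univ
    · exact hpu ▸ Set.subset_univ H
    · exact (hH.subset_boxe_iff hpu).2 ⟨p, hp, le_rfl⟩
  · rintro _ ⟨⟨F, -, rfl⟩, hHF⟩
    refine Set.subset_iInter₂ fun q hq => ?_
    by_cases hqu : boxe A B q.1 q.2 = Set.univ
    · exact hqu ▸ Set.subset_univ _
    · have hHq : H ⊆ boxe A B q.1 q.2 := hHF.trans (Set.iInter₂_subset q hq)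
      obtain ⟨p, hp, hpq⟩ := (hH.subset_boxe_iff hqu).1 hHq
      exact (Set.iInter₂_subset p hp).trans ((boxe_subset_boxe_iff hqu).2 hpq)

theorem exists_isBoxBasis {H : Set (A × B)} (hH : H ∈ boxDot A B) : ∃ E, IsBoxBasis H E := by
  classical
  induction hH using boxDot_induction with
  | box a b => exact ⟨_, isBoxBasis_boxe a b⟩
  | union H K _ _ ihH ihK =>
    obtain ⟨E, hE⟩ := ihH
    obtain ⟨F, hF⟩ := ihK
    exact ⟨_, hE.union hF⟩
  | union_circ H c d _ ih =>
    obtain ⟨E, hE⟩ := ih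
    exact ⟨_, hE.union_circ c d⟩

theorem exists_isLeast_boxProd {H : Set (A × B)} (hH : H ∈ boxDot A B) :
    ∃ K, IsLeast {K' | K' ∈ boxProd A B ∧ H ⊆ K'} K :=
  (exists_isBoxBasis hH).imp' _ fun _ hE => hE.isLeast

end BoxProduct

/-- `A ⊡ B` is a sublattice of the powerset of `A × B`; `A □ B` is a closure system
in `A ⊡ B`; in particular `A □ B`, ordered by inclusion, is a lattice whose binary
meets are intersections. -/
theorem boxProd_lattice :
    (∀ H ∈ boxDot A B, ∀ K ∈ boxDot A B, H ∪ K ∈ boxDot A B ∧ H ∩ K ∈ boxDot A B) ∧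
    (∀ H ∈ boxDot A B, ∃ K, IsLeast {K' | K' ∈ boxProd A B ∧ H ⊆ K'} K) ∧
    (∀ H ∈ boxProd A B, ∀ K ∈ boxProd A B, H ∩ K ∈ boxProd A B) ∧
    (∀ H K : {X // X ∈ boxProd A B}, (∃ z, IsLUB {H, K} z) ∧ (∃ w, IsGLB {H, K} w)) := by
  refine ⟨fun H hH K hK => ⟨supClosed_boxDot hH hK, infClosed_boxDot hH hK⟩,
    fun H hH => exists_isLeast_boxProd hH, fun H hH K hK => infClosed_boxProd hH hK,
    fun H K => ⟨?_, ⟨_, isGLB_pair_of_infClosed infClosed_boxProd H K⟩⟩⟩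
  have hHK : (H ∪ K : Set (A × B)) ∈ boxDot A B :=
    supClosed_boxDot (boxProd_subset_boxDot H.2) (boxProd_subset_boxDot K.2)
  obtain ⟨Z, hZ⟩ := exists_isLeast_boxProd hHK
  exact ⟨_, isLUB_pair_of_isLeast hZ⟩
end

section
/- Let G be a finite group and let D be a finite distributive lattice with more than one element. Then there exists a finite lattice L such that the group of lattice automorphisms of L (bijective maps L → L preserving joins and meets, under composition) is isomorphic to G, and the set of lattice congruences of L, ordered by inclusion, is order-isomorphic to D. -/
/-- The lattice automorphisms of `L`: bijections preserving joins and meets. -/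
abbrev LatAut (L : Type*) [Lattice L] :=
  {f : L → L // Function.Bijective f ∧
    (∀ x y : L, f (x ⊔ y) = f x ⊔ f y) ∧ ∀ x y : L, f (x ⊓ y) = f x ⊓ f y}

/-- The automorphism group of `L` (under composition) is isomorphic to `G`. -/
def AutIsoGroup (L : Type*) [Lattice L] (G : Type*) [Group G] : Prop :=
  ∃ e : LatAut L ≃ G,
    ∀ f g h : LatAut L, (∀ x, h.1 x = f.1 (g.1 x)) → e h = e f * e g

/-- The set of lattice congruences of `L`, ordered by inclusion, is
order-isomorphic to `D`. -/
def ConIsoLat (L : Type*) [Lattice L] (D : Type*) [Lattice D] : Prop :=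
  ∃ e : {θ : L → L → Prop // LatCon L θ} ≃ D,
    ∀ θ ψ : {θ : L → L → Prop // LatCon L θ},
      (∀ a b, θ.1 a b → ψ.1 a b) ↔ e θ ≤ e ψ

namespace IndependenceTheorem

open Set Function

section Lattice

variable {L : Type*} [Lattice L]

/-- Lattice automorphisms as order automorphisms, for which Mathlib has the group structure. -/
noncomputable def latAutEquiv : LatAut L ≃ (L ≃o L) where
  toFun f :=
    { toEquiv := .ofBijective f.1 f.2.1
      map_rel_iff' := by
        intro x y
        simp only [Equiv.ofBijective_apply, ← sup_eq_right, ← f.2.2.1, f.2.1.1.eq_iff] }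
  invFun f := ⟨f, f.bijective, f.map_sup, f.map_inf⟩
  left_inv _ := rfl
  right_inv _ := OrderIso.ext rfl

theorem autIsoGroup_of_mulEquiv {G : Type*} [Group G] (e : (L ≃o L) ≃* G) : AutIsoGroup L G := by
  refine ⟨latAutEquiv.trans e.toEquiv, fun f g h hfg => ?_⟩
  have h_mul : latAutEquiv h = latAutEquiv f * latAutEquiv g := OrderIso.ext (funext fun x => hfg x)
  exact (congrArg e h_mul).trans (map_mul e _ _)

theorem conIsoLat_of_orderIso {D : Type*} [Lattice D]
    (e : {θ : L → L → Prop // LatCon L θ} ≃o D) : ConIsoLat L D :=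
  ⟨e.toEquiv, fun _ _ => e.le_iff_le.symm⟩

end Lattice

/-! ### Lattices of closed sets -/

section ClosureOperator

variable {X : Type*}

instance (c : ClosureOperator (Set X)) : CompleteLattice c.Closeds :=
  c.gi.liftCompleteLattice

/-- The closure spaces in which the empty set and the singletons are closed, so that the points are
the atoms of the lattice of closed sets. -/
structure IsPointClosed (c : ClosureOperator (Set X)) : Prop where
  empty : c.IsClosed ∅
  singleton (x : X) : c.IsClosed {x}

/-- The sets `S` that occur as the set of points collapsed to the bottom by a congruence of the
lattice of closed sets. -/
def IsAbsorbing (c : ClosureOperator (Set X)) (S : Set X) : Prop :=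
  ∀ ⦃A : Set X⦄, c.IsClosed A → c.IsClosed (A ∪ S)

/-- The congruence collapsing the points of `S`: two closed sets are related when they have the
same points outside `S`. -/
def AgreeOff (c : ClosureOperator (Set X)) (S : Set X) (A B : c.Closeds) : Prop :=
  A.1 ∪ S = B.1 ∪ S

/-- The set of points collapsed to the bottom by `θ`. -/
def kernel (c : ClosureOperator (Set X)) (θ : c.Closeds → c.Closeds → Prop) : Set X :=
  {x | θ ⊥ (c.toCloseds {x})}

variable {c : ClosureOperator (Set X)}

theorem coe_inf (A B : c.Closeds) : (A ⊓ B).1 = A.1 ∩ B.1 := rfl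

theorem toCloseds_union (S T : Set X) :
    c.toCloseds (S ∪ T) = c.toCloseds S ⊔ c.toCloseds T :=
  c.gi.gc.l_sup

theorem toCloseds_coe (A : c.Closeds) : c.toCloseds A.1 = A :=
  c.gi.l_u_eq A

theorem toCloseds_singleton_le {x : X} {A : c.Closeds} : c.toCloseds {x} ≤ A ↔ x ∈ A.1 :=
  (c.gi.gc _ _).trans singleton_subset_iff

namespace IsPointClosed

variable (hc : IsPointClosed c)
include hc

theorem coe_bot : (⊥ : c.Closeds).1 = ∅ := hc.empty.closure_eq

theorem coe_toCloseds_singleton (x : X) : (c.toCloseds {x}).1 = {x} :=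
  (hc.singleton x).closure_eq

theorem inf_toCloseds_singleton_eq_bot {x : X} {A : c.Closeds} (hx : x ∉ A.1) :
    A ⊓ c.toCloseds {x} = ⊥ := by
  refine Subtype.ext ?_
  rwa [coe_inf, hc.coe_bot, hc.coe_toCloseds_singleton, inter_singleton_eq_empty]

end IsPointClosed

theorem AgreeOff.mono {S T : Set X} (hST : S ⊆ T) {A B : c.Closeds} (h : AgreeOff c S A B) :
    AgreeOff c T A B := by
  unfold AgreeOff at *
  rw [← union_eq_self_of_subset_left hST, ← union_assoc, h, union_assoc]

theorem IsAbsorbing.closure_union_subset {S A B A' B' : Set X} (hS : IsAbsorbing c S)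
    (hA : A ⊆ A' ∪ S) (hB : B ⊆ B' ∪ S) : c (A ∪ B) ⊆ c (A' ∪ B') ∪ S :=
  ClosureOperator.closure_min
    (union_subset
      (hA.trans (union_subset_union_left S (subset_union_left.trans (c.le_closure _))))
      (hB.trans (union_subset_union_left S (subset_union_right.trans (c.le_closure _)))))
    (hS (c.isClosed_closure _))

theorem IsAbsorbing.latCon_agreeOff {S : Set X} (hS : IsAbsorbing c S) :
    LatCon c.Closeds (AgreeOff c S) := by
  refine ⟨⟨fun _ => rfl, Eq.symm, Eq.trans⟩, fun A A' B B' hA hB => ⟨?_, ?_⟩⟩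
  · exact (union_subset (hS.closure_union_subset (subset_union_left.trans hA.subset)
      (subset_union_left.trans hB.subset)) subset_union_right).antisymm
      (union_subset (hS.closure_union_subset (subset_union_left.trans hA.superset)
      (subset_union_left.trans hB.superset)) subset_union_right)
  · unfold AgreeOff at *
    rw [coe_inf, coe_inf, inter_union_distrib_right, hA, hB, inter_union_distrib_right]

theorem IsPointClosed.kernel_agreeOff (hc : IsPointClosed c) (S : Set X) :
    kernel c (AgreeOff c S) = S := by
  ext x
  simp [kernel, AgreeOff, hc.coe_bot, hc.coe_toCloseds_singleton, insert_eq_self,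
    eq_comm (a := S)]

section LatCon

variable {θ : c.Closeds → c.Closeds → Prop}

theorem kernel_mono {ψ : c.Closeds → c.Closeds → Prop} (h : θ ≤ ψ) : kernel c θ ⊆ kernel c ψ :=
  fun _ => h _ _

theorem subset_union_kernel_of_latCon (hc : IsPointClosed c) (hθ : LatCon c.Closeds θ)
    {A B : c.Closeds} (h : θ A B) : A.1 ⊆ B.1 ∪ kernel c θ := by
  refine fun x hxA => or_iff_not_imp_left.2 fun hxB => ?_
  have h_inf := (hθ.2 _ _ _ _ h (hθ.1.refl (c.toCloseds {x}))).2
  rw [inf_eq_right.2 (toCloseds_singleton_le.2 hxA), hc.inf_toCloseds_singleton_eq_bot hxB] at h_inf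
  exact hθ.1.symm h_inf

variable [Finite X]

theorem latCon_bot_toCloseds_kernel (hθ : LatCon c.Closeds θ) :
    θ ⊥ (c.toCloseds (kernel c θ)) := by
  refine Set.Finite.induction_on_subset (motive := fun F _ => θ ⊥ (c.toCloseds F)) _
    (toFinite (kernel c θ)) (hθ.1.refl _) fun {x F} hx _ _ ih => ?_
  rw [insert_eq, toCloseds_union, ← sup_idem ⊥]
  exact (hθ.2 _ _ _ _ hx ih).1

theorem latCon_toCloseds_union_kernel (hθ : LatCon c.Closeds θ) (A : c.Closeds) :
    θ A (c.toCloseds (A.1 ∪ kernel c θ)) := by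
  have h_sup := (hθ.2 _ _ _ _ (hθ.1.refl A) (latCon_bot_toCloseds_kernel hθ)).1
  rwa [sup_bot_eq, ← toCloseds_coe A, ← toCloseds_union, toCloseds_coe] at h_sup

theorem isAbsorbing_kernel (hc : IsPointClosed c) (hθ : LatCon c.Closeds θ) :
    IsAbsorbing c (kernel c θ) := fun A hA =>
  ClosureOperator.isClosed_iff_closure_le.2 <| subset_union_kernel_of_latCon hc hθ <|
    hθ.1.symm (latCon_toCloseds_union_kernel hθ ⟨A, hA⟩)

theorem agreeOff_kernel (hc : IsPointClosed c) (hθ : LatCon c.Closeds θ) :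
    AgreeOff c (kernel c θ) = θ := by
  ext A B
  refine ⟨fun h => ?_, fun h => ?_⟩
  · have hB := latCon_toCloseds_union_kernel hθ B
    rw [← show A.1 ∪ kernel c θ = B.1 ∪ kernel c θ from h] at hB
    exact hθ.1.trans (latCon_toCloseds_union_kernel hθ A) (hθ.1.symm hB)
  · exact (union_subset (subset_union_kernel_of_latCon hc hθ h) subset_union_right).antisymm
      (union_subset (subset_union_kernel_of_latCon hc hθ (hθ.1.symm h)) subset_union_right)

/-- Congruences of the lattice of closed sets correspond to absorbing sets. -/
def kernelOrderIso (hc : IsPointClosed c) :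
    {θ : c.Closeds → c.Closeds → Prop // LatCon c.Closeds θ} ≃o {S // IsAbsorbing c S} :=
  Equiv.toOrderIso
    { toFun := fun θ => ⟨kernel c θ.1, isAbsorbing_kernel hc θ.2⟩
      invFun := fun S => ⟨AgreeOff c S.1, S.2.latCon_agreeOff⟩
      left_inv := fun θ => Subtype.ext (agreeOff_kernel hc θ.2)
      right_inv := fun S => Subtype.ext (hc.kernel_agreeOff S.1) }
    (fun _ _ h => kernel_mono h)
    (fun _ _ h _ _ => AgreeOff.mono h)

end LatCon

/-- The permutations of the points that preserve closedness in both directions. -/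
def closedPerm (c : ClosureOperator (Set X)) : Subgroup (Equiv.Perm X) where
  carrier := {σ | ∀ A, c.IsClosed (σ '' A) ↔ c.IsClosed A}
  one_mem' A := by simp
  mul_mem' {σ τ} hσ hτ A := by rw [Equiv.Perm.coe_mul, image_comp, hσ, hτ]
  inv_mem' {σ} hσ A := by rw [← hσ, ← image_comp, ← Equiv.Perm.coe_mul]; simp

theorem image_closure {σ : Equiv.Perm X} (hσ : σ ∈ closedPerm c) (A : Set X) :
    σ '' c A = c (σ '' A) := by
  refine Subset.antisymm ?_ ?_
  · have h_closed : c.IsClosed (σ ⁻¹' c (σ '' A)) := by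
      rw [← hσ, image_preimage_eq _ σ.surjective]
      exact c.isClosed_closure _
    exact image_subset_iff.2 <|
      ClosureOperator.closure_min (image_subset_iff.1 (c.le_closure _)) h_closed
  · exact ClosureOperator.closure_min (image_mono (c.le_closure A))
      ((hσ _).2 (c.isClosed_closure A))

theorem IsAbsorbing.preimage {S : Set X} (hS : IsAbsorbing c S) {σ : Equiv.Perm X}
    (hσ : σ ∈ closedPerm c) : IsAbsorbing c (σ ⁻¹' S) := fun A hA => by
  rw [← hσ, image_union, image_preimage_eq _ σ.surjective]
  exact hS ((hσ A).2 hA)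

/-- The automorphism of the lattice of closed sets induced by a permutation of the points. -/
def imageOrderIso (σ : closedPerm c) : c.Closeds ≃o c.Closeds where
  toEquiv := (Equiv.Set.congr σ.1).subtypeEquiv fun A => (σ.2 A).symm
  map_rel_iff' := image_subset_image_iff σ.1.injective

namespace IsPointClosed

variable (hc : IsPointClosed c)
include hc

theorem isAtom_iff {A : c.Closeds} : IsAtom A ↔ ∃ x, c.toCloseds {x} = A := by
  have h_ne (B : c.Closeds) : B ≠ ⊥ ↔ B.1.Nonempty := by
    rw [nonempty_iff_ne_empty, ← hc.coe_bot, Subtype.coe_injective.ne_iff]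
  refine ⟨fun hA => ?_, ?_⟩
  · obtain ⟨x, hx⟩ := (h_ne A).1 hA.1
    have h_point : c.toCloseds {x} ≠ ⊥ := by simp [h_ne, hc.coe_toCloseds_singleton]
    exact ⟨x, (hA.le_iff_eq h_point).1 (toCloseds_singleton_le.2 hx)⟩
  · rintro ⟨x, rfl⟩
    refine isAtom_iff_le_of_ge.2 ⟨by simp [h_ne, hc.coe_toCloseds_singleton], fun B hB h_le => ?_⟩
    obtain ⟨y, hy⟩ := (h_ne B).1 hB
    have hyx : y = x := by simpa [hc.coe_toCloseds_singleton] using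
      (show B.1 ⊆ (c.toCloseds {x}).1 from h_le) hy
    exact toCloseds_singleton_le.2 (hyx ▸ hy)

/-- The points are the atoms of the lattice of closed sets. -/
noncomputable def pointEquiv : X ≃ {A : c.Closeds // IsAtom A} :=
  .ofBijective (fun x => ⟨c.toCloseds {x}, hc.isAtom_iff.2 ⟨x, rfl⟩⟩)
    ⟨fun x y h => singleton_injective <| by
        simpa only [hc.coe_toCloseds_singleton] using congrArg (fun A => A.1.1) h,
      fun A => (hc.isAtom_iff.1 A.2).imp fun _ => Subtype.ext⟩

theorem exists_perm_image_eq (f : c.Closeds ≃o c.Closeds) :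
    ∃ σ : Equiv.Perm X, ∀ A, (f A).1 = σ '' A.1 := by
  let σ : Equiv.Perm X := hc.pointEquiv.trans <|
    (f.toEquiv.subtypeEquiv fun A => (f.isAtom_iff A).symm).trans hc.pointEquiv.symm
  have h_point (x : X) : c.toCloseds {σ x} = f (c.toCloseds {x}) :=
    congrArg Subtype.val (hc.pointEquiv.apply_symm_apply _)
  refine ⟨σ, fun A => ?_⟩
  ext y
  obtain ⟨x, rfl⟩ := σ.surjective y
  rw [σ.injective.mem_set_image, ← toCloseds_singleton_le, h_point, f.le_iff_le,
    toCloseds_singleton_le]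

theorem imageOrderIso_bijective : Bijective (imageOrderIso (c := c)) := by
  refine ⟨fun σ τ h => Subtype.ext (Equiv.ext fun x => ?_), fun f => ?_⟩
  · have h_image : σ.1 '' {x} = τ.1 '' {x} :=
      congrArg (fun f : c.Closeds ≃o c.Closeds => (f ⟨{x}, hc.singleton x⟩).1) h
    simpa using h_image
  · obtain ⟨σ, hσ⟩ := hc.exists_perm_image_eq f
    have h_mem : σ ∈ closedPerm c := fun A => by
      refine ⟨fun hA => ?_, fun hA => hσ ⟨A, hA⟩ ▸ (f ⟨A, hA⟩).2⟩
      obtain ⟨B, hB⟩ := f.surjective ⟨σ '' A, hA⟩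
      have h_image : σ '' B.1 = σ '' A := (hσ B).symm.trans (congrArg Subtype.val hB)
      exact σ.injective.image_injective h_image ▸ B.2
    exact ⟨⟨σ, h_mem⟩, OrderIso.ext (funext fun A => Subtype.ext (hσ A).symm)⟩

/-- Every automorphism of the lattice of closed sets permutes its atoms, the points. -/
noncomputable def closedPermMulEquiv : closedPerm c ≃* (c.Closeds ≃o c.Closeds) where
  toEquiv := .ofBijective imageOrderIso hc.imageOrderIso_bijective
  map_mul' σ τ := OrderIso.ext (funext fun A => Subtype.ext (image_comp σ.1 τ.1 A.1))

end IsPointClosed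

end ClosureOperator

/-! ### Gluing closure spaces along a poset -/

theorem exists_sigmaCongrRight_eq {P : Type*} {X : P → Type*} {σ : Equiv.Perm (Σ p, X p)}
    (hσ : ∀ x, (σ x).1 = x.1) : ∃ τ : ∀ p, Equiv.Perm (X p), Equiv.sigmaCongrRight τ = σ := by
  let τ (p : P) : Equiv.Perm (X p) := (Equiv.sigmaSubtype p).symm.trans <|
    (σ.subtypeEquiv fun x => by rw [hσ]).trans (Equiv.sigmaSubtype p)
  refine ⟨τ, Equiv.ext fun x => ?_⟩
  have h_snd := congrArg Subtype.val <| (Equiv.sigmaSubtype x.1).symm_apply_apply ⟨σ x, hσ x⟩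
  exact h_snd

section Glue

variable {P : Type*} [PartialOrder P] {X : P → Type*}

/-- A closure space is simple when its absorbing sets are trivial; if its points are closed, this
says that its lattice of closed sets is simple. -/
def IsSimpleClosure {Y : Type*} (c : ClosureOperator (Set Y)) : Prop :=
  ∀ ⦃S : Set Y⦄, IsAbsorbing c S → S.Nonempty → S = univ

/-- The closed sets of the glued space: they meet each block in a closed set, and they contain a
block as soon as they meet both that block and a higher one. -/
def IsGlueClosed (c : ∀ p, ClosureOperator (Set (X p))) (A : Set (Σ p, X p)) : Prop :=
  (∀ p, (c p).IsClosed (Sigma.mk p ⁻¹' A)) ∧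
    ∀ ⦃p q⦄, p < q → (Sigma.mk p ⁻¹' A).Nonempty → (Sigma.mk q ⁻¹' A).Nonempty →
      Sigma.mk p ⁻¹' A = univ

/-- The closure spaces `c p` glued along the order of `P`. -/
def glue (c : ∀ p, ClosureOperator (Set (X p))) : ClosureOperator (Set (Σ p, X p)) :=
  .ofCompletePred (IsGlueClosed c) fun 𝒜 h𝒜 => by
    refine ⟨fun p => ?_, fun p q hpq hp hq => ?_⟩
    · rw [sInf_eq_sInter, preimage_sInter, biInter_eq_iInter, ← iInf_eq_iInter]
      exact ClosureOperator.sInf_isClosed (forall_mem_range.2 fun A => (h𝒜 A A.2).1 p)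
    · refine eq_univ_of_forall fun x A hA => ?_
      have h_sub (r : P) : Sigma.mk r ⁻¹' sInf 𝒜 ⊆ Sigma.mk r ⁻¹' A :=
        preimage_mono (sInter_subset_of_mem hA)
      exact ((h𝒜 A hA).2 hpq (hp.mono (h_sub p)) (hq.mono (h_sub q))).superset (mem_univ x)

variable {c : ∀ p, ClosureOperator (Set (X p))}

theorem glue_isClosed_iff {A : Set (Σ p, X p)} : (glue c).IsClosed A ↔ IsGlueClosed c A := Iff.rfl

section PointClosed

variable (hc : ∀ p, IsPointClosed (c p))
include hc

theorem glue_isClosed_image_mk_iff {p : P} {A : Set (X p)} :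
    (glue c).IsClosed (Sigma.mk p '' A) ↔ (c p).IsClosed A := by
  have h_other {q : P} (hq : q ≠ p) : Sigma.mk q ⁻¹' (Sigma.mk p '' A) = (∅ : Set (X q)) :=
    sigma_mk_preimage_image' hq.symm
  refine ⟨fun h => by simpa only [sigma_mk_preimage_image_eq_self] using h.1 p, fun h => ?_⟩
  refine ⟨fun q => ?_, fun q r hqr hq hr => ?_⟩
  · obtain rfl | hq := eq_or_ne q p
    · rwa [sigma_mk_preimage_image_eq_self]
    · exact h_other hq ▸ (hc q).empty
  · have hqp : q = p := by_contra fun h => hq.ne_empty (h_other h)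
    have hrp : r = p := by_contra fun h => hr.ne_empty (h_other h)
    exact absurd (hqp.trans hrp.symm) hqr.ne

theorem isPointClosed_glue : IsPointClosed (glue c) where
  empty := ⟨fun p => (hc p).empty, fun _ _ _ h => absurd h not_nonempty_empty⟩
  singleton x := by
    rw [← Sigma.eta x, ← image_singleton, glue_isClosed_image_mk_iff hc]
    exact (hc _).singleton _

theorem IsAbsorbing.preimage_mk {S : Set (Σ p, X p)} (hS : IsAbsorbing (glue c) S) (p : P) :
    IsAbsorbing (c p) (Sigma.mk p ⁻¹' S) := fun A hA => by
  simpa only [preimage_union, sigma_mk_preimage_image_eq_self] using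
    (hS ((glue_isClosed_image_mk_iff hc).2 hA)).1 p

theorem sigmaCongrRight_mem_closedPerm_glue_iff {τ : ∀ p, Equiv.Perm (X p)} :
    Equiv.sigmaCongrRight τ ∈ closedPerm (glue c) ↔ ∀ p, τ p ∈ closedPerm (c p) := by
  have h_image (p : P) (A : Set (X p)) :
      Equiv.sigmaCongrRight τ '' (Sigma.mk p '' A) = Sigma.mk p '' (τ p '' A) := by
    simp only [← image_comp]
    rfl
  have h_fiber (A : Set (Σ p, X p)) (p : P) :
      Sigma.mk p ⁻¹' (Equiv.sigmaCongrRight τ '' A) = τ p '' (Sigma.mk p ⁻¹' A) := by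
    ext x
    simp only [Equiv.image_eq_preimage_symm]
    rfl
  refine ⟨fun h p A => ?_, fun h A => ?_⟩
  · rw [← glue_isClosed_image_mk_iff hc, ← h_image, h, glue_isClosed_image_mk_iff hc]
  · have h_univ (p : P) (B : Set (X p)) : τ p '' B = univ ↔ B = univ := by
      nth_rw 1 [← image_univ_of_surjective (τ p).surjective]
      exact (τ p).injective.image_injective.eq_iff
    simp only [glue_isClosed_iff, IsGlueClosed, h_fiber, h _ _, image_nonempty, h_univ]

end PointClosed

theorem isAbsorbing_glue_of_isLowerSet {I : Set P} (hI : IsLowerSet I) :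
    IsAbsorbing (glue c) (Sigma.fst ⁻¹' I) := by
  have h_of_notMem {A : Set (Σ p, X p)} {p : P} (hp : p ∉ I) :
      Sigma.mk p ⁻¹' (A ∪ Sigma.fst ⁻¹' I) = Sigma.mk p ⁻¹' A := by
    ext x
    simp [hp]
  have h_of_mem {A : Set (Σ p, X p)} {p : P} (hp : p ∈ I) :
      Sigma.mk p ⁻¹' (A ∪ Sigma.fst ⁻¹' I) = univ :=
    eq_univ_of_forall fun x => Or.inr hp
  refine fun A hA => ⟨fun p => ?_, fun p q hpq h_ne_p h_ne_q => ?_⟩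
  · by_cases hp : p ∈ I
    · exact h_of_mem hp ▸ (c p).isClosed_iff.2 (c p).closure_top
    · exact (h_of_notMem hp).symm ▸ hA.1 p
  · by_cases hp : p ∈ I
    · exact h_of_mem hp
    · rw [h_of_notMem hp] at h_ne_p ⊢
      rw [h_of_notMem fun hq => hp (hI hpq.le hq)] at h_ne_q
      exact hA.2 hpq h_ne_p h_ne_q

variable (hc : ∀ p, IsPointClosed (c p)) (hs : ∀ p, IsSimpleClosure (c p))
  [∀ p, Nontrivial (X p)]
include hc hs

theorem IsAbsorbing.mem_of_fst_le {S : Set (Σ p, X p)} (hS : IsAbsorbing (glue c) S)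
    {x y : Σ p, X p} (hx : x ∈ S) (hyx : y.1 ≤ x.1) : y ∈ S := by
  obtain ⟨p, x⟩ := x
  obtain ⟨q, y⟩ := y
  have h_full {r : P} (h : (Sigma.mk r ⁻¹' S).Nonempty) : Sigma.mk r ⁻¹' S = univ :=
    hs r (hS.preimage_mk hc r) h
  suffices h : (Sigma.mk q ⁻¹' S).Nonempty from (h_full h).superset (mem_univ y)
  obtain rfl | hqp := hyx.eq_or_lt
  · exact ⟨x, hx⟩
  obtain ⟨z, hzy⟩ := exists_ne y
  have h_closed : (glue c).IsClosed ({⟨q, y⟩} ∪ S) := hS ((isPointClosed_glue hc).singleton _)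
  have h_block := h_closed.2 hqp ⟨y, Or.inl rfl⟩ ⟨x, Or.inr hx⟩
  have hz := h_block.superset (mem_univ z)
  exact ⟨z, hz.resolve_left fun h => hzy (by simpa using h)⟩

/-- The absorbing sets of the glued space are the unions of blocks over a lower set. -/
def lowerSetOrderIsoAbsorbing : LowerSet P ≃o {S // IsAbsorbing (glue c) S} :=
  Equiv.toOrderIso
    { toFun := fun I => ⟨Sigma.fst ⁻¹' (I : Set P), isAbsorbing_glue_of_isLowerSet I.lower⟩
      invFun := fun S =>
        { carrier := Sigma.fst '' S.1
          lower' := by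
            rintro _ q hq ⟨x, hx, rfl⟩
            obtain ⟨y⟩ := (inferInstance : Nonempty (X q))
            exact ⟨⟨q, y⟩, S.2.mem_of_fst_le hc hs hx hq, rfl⟩ }
      left_inv := fun I => SetLike.coe_injective <|
        image_preimage_eq _ fun p => ⟨⟨p, Classical.arbitrary (X p)⟩, rfl⟩
      right_inv := fun S => Subtype.ext <| Subset.antisymm
        (by rintro y ⟨x, hx, hxy⟩; exact S.2.mem_of_fst_le hc hs hx hxy.ge)
        (subset_preimage_image _ _) }
    (fun _ _ h => preimage_mono h)
    (fun _ _ h => image_mono h)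

theorem fst_apply_le_of_mem_closedPerm_glue {σ : Equiv.Perm (Σ p, X p)}
    (hσ : σ ∈ closedPerm (glue c)) {x y : Σ p, X p} (h : y.1 ≤ x.1) : (σ y).1 ≤ (σ x).1 := by
  have h_absorbing := (isAbsorbing_glue_of_isLowerSet (isLowerSet_Iic (σ x).1)).preimage hσ
  exact h_absorbing.mem_of_fst_le hc hs (le_refl (σ x).1) h

theorem fst_apply_le_iff_of_mem_closedPerm_glue {σ : Equiv.Perm (Σ p, X p)}
    (hσ : σ ∈ closedPerm (glue c)) {x y : Σ p, X p} : (σ y).1 ≤ (σ x).1 ↔ y.1 ≤ x.1 := by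
  refine ⟨fun h => ?_, fst_apply_le_of_mem_closedPerm_glue hc hs hσ⟩
  simpa using fst_apply_le_of_mem_closedPerm_glue hc hs (inv_mem hσ) h

theorem fst_apply_eq_of_mem_closedPerm_glue (hX : Pairwise fun p q => IsEmpty (X p ≃ X q))
    {σ : Equiv.Perm (Σ p, X p)} (hσ : σ ∈ closedPerm (glue c)) (x : Σ p, X p) :
    (σ x).1 = x.1 := by
  have h_iff (y : Σ p, X p) : y.1 = x.1 ↔ (σ y).1 = (σ x).1 := by
    simp only [le_antisymm_iff, fst_apply_le_iff_of_mem_closedPerm_glue hc hs hσ]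
  have e : X x.1 ≃ X (σ x).1 :=
    (Equiv.sigmaSubtype x.1).symm.trans <| (σ.subtypeEquiv h_iff).trans (Equiv.sigmaSubtype _)
  exact by_contra fun h => (hX (Ne.symm h)).false e

/-- When the blocks have distinct sizes, the automorphisms of the glued space act blockwise. -/
noncomputable def piClosedPermMulEquiv (hX : Pairwise fun p q => IsEmpty (X p ≃ X q)) :
    (∀ p, closedPerm (c p)) ≃* closedPerm (glue c) :=
  let blockwise : (∀ p, closedPerm (c p)) →* closedPerm (glue c) :=
    { toFun := fun τ => ⟨Equiv.sigmaCongrRight fun p => (τ p).1,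
        (sigmaCongrRight_mem_closedPerm_glue_iff hc).2 fun p => (τ p).2⟩
      map_one' := rfl
      map_mul' := fun _ _ => rfl }
  .ofBijective blockwise <| by
    refine ⟨fun τ τ' h => ?_, fun σ => ?_⟩
    · have h_perm : (fun p => (τ p).1) = fun p => (τ' p).1 :=
        Equiv.Perm.sigmaCongrRightHom_injective (congrArg Subtype.val h)
      exact funext fun p => Subtype.ext (congrFun h_perm p)
    · obtain ⟨τ, hτ⟩ := exists_sigmaCongrRight_eq <|
        fst_apply_eq_of_mem_closedPerm_glue hc hs hX σ.2
      have h_mem := (sigmaCongrRight_mem_closedPerm_glue_iff hc).1 (hτ ▸ σ.2)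
      exact ⟨fun p => ⟨τ p, h_mem p⟩, Subtype.ext hτ⟩

end Glue

/-! ### The Cayley colour graph as a closure space -/

section Spans

variable {X : Type*} {c : ClosureOperator (Set X)}

/-- Two points span a closure space when no proper closed set contains both. -/
def Spans (c : ClosureOperator (Set X)) (x y : X) : Prop :=
  c {x, y} = univ

theorem spans_iff_forall_isClosed {x y : X} :
    Spans c x y ↔ ∀ A, c.IsClosed A → x ∈ A → y ∈ A → A = univ := by
  refine ⟨fun h A hA hx hy => ?_, fun h => ?_⟩
  · exact univ_subset_iff.1 (h.superset.trans (ClosureOperator.closure_min (pair_subset hx hy) hA))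
  · have h_sub := c.le_closure {x, y}
    exact h _ (c.isClosed_closure _) (h_sub (mem_insert _ _)) (h_sub (mem_insert_of_mem _ rfl))

theorem Spans.symm {x y : X} (h : Spans c x y) : Spans c y x := by
  rwa [Spans, pair_comm]

theorem spans_apply_iff {σ : Equiv.Perm X} (hσ : σ ∈ closedPerm c) {x y : X} :
    Spans c (σ x) (σ y) ↔ Spans c x y := by
  rw [Spans, ← image_pair, ← image_closure hσ]
  nth_rw 1 [← image_univ_of_surjective σ.surjective]
  exact σ.injective.image_injective.eq_iff

theorem isClosed_pair_apply_iff {σ : Equiv.Perm X} (hσ : σ ∈ closedPerm c) {x y : X} :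
    c.IsClosed {σ x, σ y} ↔ c.IsClosed {x, y} := by
  rw [← image_pair, hσ]

theorem apply_mem_closure_pair_iff {σ : Equiv.Perm X} (hσ : σ ∈ closedPerm c) {x y w : X} :
    σ w ∈ c {σ x, σ y} ↔ w ∈ c {x, y} := by
  rw [← image_pair, ← image_closure hσ, σ.injective.mem_set_image]

theorem IsAbsorbing.mem_of_spans {S : Set X} (hS : IsAbsorbing c S) (hc : IsPointClosed c)
    {x y w : X} (hx : x ∈ S) (h : Spans c x y) (hw : w ≠ y) : w ∈ S := by
  have h_univ := spans_iff_forall_isClosed.1 h _ (hS (hc.singleton y)) (Or.inr hx) (Or.inl rfl)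
  exact (h_univ.superset (mem_univ w)).resolve_left hw

end Spans

/-- The points of a closure space encoding the Cayley colour graph of a group `K` with colours in
`ι`: two copies of `K`, the colours, and two points that make the space simple. -/
inductive CayleyPoint (K ι : Type*)
  | left (g : K)
  | right (h : K)
  | color (i : ι)
  | hub
  | tip

namespace CayleyPoint

variable {K ι : Type*} [Group K]

/-- Left translation on both copies of `K`. -/
instance : MulAction K (CayleyPoint K ι) where
  smul
    | k, left g => left (k * g)
    | k, right h => right (k * h)
    | _, color i => color i
    | _, hub => hub
    | _, tip => tip
  one_smul x := by cases x <;> simp [HSMul.hSMul]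
  mul_smul k l x := by cases x <;> simp [HSMul.hSMul, mul_assoc]

@[simp] theorem smul_left (k g : K) : k • (left g : CayleyPoint K ι) = left (k * g) := rfl

@[simp] theorem smul_right (k h : K) : k • (right h : CayleyPoint K ι) = right (k * h) := rfl

@[simp] theorem smul_color (k : K) (i : ι) : k • (color i : CayleyPoint K ι) = color i := rfl

variable [Preorder ι]

/-- The closed sets of the Cayley closure space: `left g` and `right h` generate the colour of
`g⁻¹ * h`, and `left g` makes the order of the colours visible. -/
structure IsCayleyClosed (f : K → ι) (A : Set (CayleyPoint K ι)) : Prop where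
  color_mem {g h : K} : left g ∈ A → right h ∈ A → color (f (g⁻¹ * h)) ∈ A
  color_mono {g : K} {i j : ι} : left g ∈ A → color i ∈ A → i ≤ j → color j ∈ A
  hub_left {g : K} : hub ∈ A → left g ∈ A → A = univ
  hub_color {i : ι} : hub ∈ A → color i ∈ A → A = univ
  tip_color {i : ι} : tip ∈ A → color i ∈ A → A = univ

/-- The closure operator whose closed sets are given by `IsCayleyClosed f`. -/
def cayley (f : K → ι) : ClosureOperator (Set (CayleyPoint K ι)) :=
  .ofCompletePred (IsCayleyClosed f) fun _ h𝒜 =>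
    { color_mem := fun hg hh A hA => (h𝒜 A hA).color_mem (hg A hA) (hh A hA)
      color_mono := fun hg hi hij A hA => (h𝒜 A hA).color_mono (hg A hA) (hi A hA) hij
      hub_left := fun hz hg => sInf_eq_top.2 fun A hA => (h𝒜 A hA).hub_left (hz A hA) (hg A hA)
      hub_color := fun hz hi => sInf_eq_top.2 fun A hA => (h𝒜 A hA).hub_color (hz A hA) (hi A hA)
      tip_color := fun hu hi =>
        sInf_eq_top.2 fun A hA => (h𝒜 A hA).tip_color (hu A hA) (hi A hA) }

variable {f : K → ι}

theorem isPointClosed_cayley : IsPointClosed (cayley f) where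
  empty := by constructor <;> simp
  singleton x := by constructor <;> grind

theorem isCayleyClosed_compl_hub_tip : IsCayleyClosed f {hub, tip}ᶜ := by
  constructor <;> simp

theorem isCayleyClosed_hub_tip_right : IsCayleyClosed f ({hub, tip} ∪ range right) := by
  constructor <;> simp

theorem spans_hub_left (g : K) : Spans (cayley f) hub (left g) :=
  spans_iff_forall_isClosed.2 fun _ hA => IsCayleyClosed.hub_left hA

theorem spans_hub_color (i : ι) : Spans (cayley f) hub (color i) :=
  spans_iff_forall_isClosed.2 fun _ hA => IsCayleyClosed.hub_color hA

theorem spans_tip_color (i : ι) : Spans (cayley f) tip (color i) :=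
  spans_iff_forall_isClosed.2 fun _ hA => IsCayleyClosed.tip_color hA

theorem isSimpleClosure_cayley : IsSimpleClosure (cayley f) := by
  rintro S hS ⟨x, hx⟩
  have h_mem {x y w : CayleyPoint K ι} (hx : x ∈ S) (h : Spans (cayley f) x y) (hw : w ≠ y) :
      w ∈ S := hS.mem_of_spans isPointClosed_cayley hx h hw
  obtain ⟨i, hi⟩ : ∃ i, color i ∈ S := by
    cases x with
    | left g => exact ⟨f 1, h_mem hx (spans_hub_left g).symm (by simp)⟩
    | right h =>
      have h_closed := hS (isPointClosed_cayley.singleton (left 1))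
      have h_color := h_closed.color_mem (Or.inl rfl) (Or.inr hx)
      exact ⟨_, h_color.resolve_left (by simp)⟩
    | color i => exact ⟨i, hx⟩
    | hub => exact ⟨f 1, h_mem hx (spans_hub_left 1) (by simp)⟩
    | tip =>
      have h_hub : hub ∈ S := h_mem hx (spans_tip_color (f 1)) (by simp)
      exact ⟨f 1, h_mem h_hub (spans_hub_left 1) (by simp)⟩
  refine eq_univ_of_forall fun w => ?_
  obtain rfl | hw := eq_or_ne w hub
  · exact h_mem hi (spans_tip_color i).symm (by simp)
  · exact h_mem hi (spans_hub_color i).symm hw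

theorem isClosed_cayley_pair_right_iff {x : CayleyPoint K ι} {h : K} :
    (cayley f).IsClosed {x, right h} ↔ x ∉ range left := by
  refine ⟨?_, fun hx => by constructor <;> grind⟩
  rintro h_closed ⟨g, rfl⟩
  have h_color := h_closed.color_mem (Or.inl rfl) (Or.inr rfl)
  simp at h_color

theorem forall_not_spans_iff {x : CayleyPoint K ι} :
    (∀ y, ¬ Spans (cayley f) x y) ↔ x ∈ range right := by
  refine ⟨fun hx => ?_, ?_⟩
  · cases x with
    | left g => exact absurd (spans_hub_left g).symm (hx hub)
    | right h => exact mem_range_self h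
    | color i => exact absurd (spans_hub_color i).symm (hx hub)
    | hub => exact absurd (spans_hub_left 1) (hx _)
    | tip => exact absurd (spans_tip_color (f 1)) (hx _)
  · rintro ⟨h, rfl⟩ y h_spans
    have h_proper := spans_iff_forall_isClosed.1 h_spans
    by_cases hy : y ∈ ({hub, tip} : Set (CayleyPoint K ι))
    · have h_univ := h_proper _ isCayleyClosed_hub_tip_right (by simp) (Or.inl hy)
      simpa using h_univ.superset (mem_univ (left 1))
    · have h_univ := h_proper _ isCayleyClosed_compl_hub_tip (by simp) hy
      simpa using h_univ.superset (mem_univ hub)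

theorem spans_left_iff {g : K} {y : CayleyPoint K ι} :
    Spans (cayley f) (left g) y ↔ y = hub := by
  refine ⟨fun h_spans => ?_, fun hy => hy ▸ (spans_hub_left g).symm⟩
  have h_proper := spans_iff_forall_isClosed.1 h_spans
  by_contra hy
  obtain rfl | hy' := eq_or_ne y tip
  · have h_closed : IsCayleyClosed f {left g, tip} := by constructor <;> grind
    simpa using (h_proper _ h_closed (by simp) (by simp)).superset (mem_univ hub)
  · have h_univ := h_proper _ isCayleyClosed_compl_hub_tip (by simp) (by simp [hy, hy'])
    simpa using h_univ.superset (mem_univ hub)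

theorem spans_hub_iff {y : CayleyPoint K ι} :
    Spans (cayley f) hub y ↔ y ∈ range left ∨ y ∈ range color := by
  refine ⟨fun h_spans => ?_, ?_⟩
  · have h_univ :=
      spans_iff_forall_isClosed.1 h_spans _ isCayleyClosed_hub_tip_right (by simp)
    have h_notMem : y ∉ ({hub, tip} ∪ range right : Set (CayleyPoint K ι)) := fun hy => by
      simpa using (h_univ hy).superset (mem_univ (left 1))
    cases y <;> simp at h_notMem ⊢
  · rintro (⟨g, rfl⟩ | ⟨i, rfl⟩)
    · exact spans_hub_left g
    · exact spans_hub_color i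

theorem color_mem_closure_left_right_iff {g h : K} {j : ι} :
    color j ∈ cayley f {left g, right h} ↔ f (g⁻¹ * h) ≤ j := by
  refine ⟨fun hj => ?_, fun hj => ?_⟩
  · have h_closed : IsCayleyClosed f ({left g, right h} ∪ color '' Ici (f (g⁻¹ * h))) := by
      constructor <;> grind
    simpa using ClosureOperator.closure_min subset_union_left h_closed hj
  · have h_sub := (cayley f).le_closure {left g, right h}
    have h_closed := (cayley f).isClosed_closure {left g, right h}
    have h_left := h_sub (Or.inl rfl)
    exact h_closed.color_mono h_left (h_closed.color_mem h_left (h_sub (Or.inr rfl))) hj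

theorem color_mem_closure_left_color_iff {g : K} {i j : ι} :
    color j ∈ cayley f {left g, color i} ↔ i ≤ j := by
  refine ⟨fun hj => ?_, fun hj => ?_⟩
  · have h_closed : IsCayleyClosed f ({left g} ∪ color '' Ici i) := by
      constructor <;> grind
    have h_sub : {left g, color i} ⊆ ({left g} ∪ color '' Ici i : Set (CayleyPoint K ι)) :=
      pair_subset (by simp) (by simp)
    simpa using ClosureOperator.closure_min h_sub h_closed hj
  · have h_sub := (cayley f).le_closure {left g, color i}
    exact ((cayley f).isClosed_closure _).color_mono (h_sub (Or.inl rfl)) (h_sub (Or.inr rfl)) hj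

section Perm

variable {σ : Equiv.Perm (CayleyPoint K ι)} (hσ : σ ∈ closedPerm (cayley f))
include hσ

theorem apply_mem_range_right_iff {x : CayleyPoint K ι} :
    σ x ∈ range right ↔ x ∈ range right := by
  rw [← forall_not_spans_iff (f := f), ← forall_not_spans_iff (f := f) (x := x),
    σ.surjective.forall]
  simp only [spans_apply_iff hσ]

theorem apply_mem_range_left_iff {x : CayleyPoint K ι} :
    σ x ∈ range left ↔ x ∈ range left := by
  obtain ⟨h, hh⟩ := (apply_mem_range_right_iff hσ).2 (mem_range_self 1)
  rw [← not_iff_not, ← isClosed_cayley_pair_right_iff (f := f) (h := h), hh,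
    isClosed_pair_apply_iff hσ, isClosed_cayley_pair_right_iff]

theorem apply_hub : σ hub = hub := by
  obtain ⟨g, hg⟩ := (apply_mem_range_left_iff hσ).2 (mem_range_self 1)
  rw [← spans_left_iff (f := f) (g := g), hg, spans_apply_iff hσ, spans_left_iff]

theorem apply_mem_range_color_iff {x : CayleyPoint K ι} :
    σ x ∈ range color ↔ x ∈ range color := by
  have h_iff (y : CayleyPoint K ι) :
      y ∈ range color ↔ Spans (cayley f) hub y ∧ y ∉ range left := by
    rw [spans_hub_iff]
    cases y <;> simp
  rw [h_iff, h_iff, apply_mem_range_left_iff hσ]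
  nth_rw 1 [← apply_hub hσ]
  rw [spans_apply_iff hσ]

theorem apply_tip : σ tip = tip := by
  have h_right := (apply_mem_range_right_iff hσ (x := tip)).not
  have h_left := (apply_mem_range_left_iff hσ (x := tip)).not
  have h_color := (apply_mem_range_color_iff hσ (x := tip)).not
  have h_hub : σ tip ≠ hub := (apply_hub hσ) ▸ σ.injective.ne (by simp)
  cases h : σ tip <;> simp_all

end Perm

theorem IsCayleyClosed.preimage_smul {A : Set (CayleyPoint K ι)} (hA : IsCayleyClosed f A)
    (k : K) : IsCayleyClosed f ((k • ·) ⁻¹' A) := by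
  have h_univ (h : A = univ) : (k • ·) ⁻¹' A = univ := by rw [h, preimage_univ]
  constructor
  · intro g h hg hh
    simpa [mul_assoc] using hA.color_mem (g := k * g) (h := k * h) hg hh
  · exact fun hg hi hij => hA.color_mono (j := _) hg hi hij
  · exact fun hz hg => h_univ (hA.hub_left hz hg)
  · exact fun hz hi => h_univ (hA.hub_color hz hi)
  · exact fun hu hi => h_univ (hA.tip_color hu hi)

theorem toPerm_mem_closedPerm_cayley (k : K) : MulAction.toPerm k ∈ closedPerm (cayley f) := by
  refine fun A => ⟨fun hA => ?_, fun hA => ?_⟩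
  · rw [← preimage_image_eq A (MulAction.toPerm k).injective]
    exact IsCayleyClosed.preimage_smul hA k
  · rw [Equiv.image_eq_preimage_symm]
    exact IsCayleyClosed.preimage_smul hA k⁻¹

section WellOrder

variable {ι : Type*} [LinearOrder ι] [WellFoundedLT ι] {f : K → ι}

theorem apply_color {σ : Equiv.Perm (CayleyPoint K ι)}
    (hσ : σ ∈ closedPerm (cayley f)) (i : ι) : σ (color i) = color i := by
  choose τ hτ using fun i => (apply_mem_range_color_iff hσ).2 (mem_range_self i)
  obtain ⟨g, hg⟩ := (apply_mem_range_left_iff hσ).2 (mem_range_self 1)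
  have h_le {i j : ι} : τ i ≤ τ j ↔ i ≤ j := by
    rw [← color_mem_closure_left_color_iff (f := f) (g := g), hg, hτ, hτ,
      apply_mem_closure_pair_iff hσ, color_mem_closure_left_color_iff]
  have h_surj : Surjective τ := fun j => by
    obtain ⟨x, hx⟩ := σ.surjective (color j)
    obtain ⟨i, rfl⟩ := (apply_mem_range_color_iff hσ).1 ⟨j, hx.symm⟩
    exact ⟨i, color.inj ((hτ i).trans hx)⟩
  let e : ι ≃o ι := RelIso.ofSurjective (OrderEmbedding.ofMapLEIff τ fun _ _ => h_le) h_surj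
  have h_id : e = OrderIso.refl ι := Subsingleton.elim _ _
  exact (hτ i).symm.trans (congrArg color (DFunLike.congr_fun h_id i))

theorem exists_toPerm_eq_of_mem_closedPerm_cayley (hf : Injective f)
    {σ : Equiv.Perm (CayleyPoint K ι)} (hσ : σ ∈ closedPerm (cayley f)) :
    ∃ k : K, MulAction.toPerm k = σ := by
  choose α hα using fun g => (apply_mem_range_left_iff hσ).2 (mem_range_self g)
  choose β hβ using fun h => (apply_mem_range_right_iff hσ).2 (mem_range_self h)
  have h_label (g h : K) : (α g)⁻¹ * β h = g⁻¹ * h := by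
    refine hf (eq_of_forall_ge_iff fun j => ?_)
    rw [← color_mem_closure_left_right_iff, hα, hβ, ← apply_color hσ,
      apply_mem_closure_pair_iff hσ, color_mem_closure_left_right_iff]
  have h_right (h : K) : β h = α 1 * h := by
    simpa [inv_mul_eq_iff_eq_mul] using h_label 1 h
  have h_left (g : K) : α g = α 1 * g := by
    simpa [h_right, inv_mul_eq_one] using h_label g g
  refine ⟨α 1, Equiv.ext fun x => ?_⟩
  cases x with
  | left g => exact (congrArg left (h_left g)).symm.trans (hα g)
  | right h => exact (congrArg right (h_right h)).symm.trans (hβ h)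
  | color i => exact (apply_color hσ i).symm
  | hub => exact (apply_hub hσ).symm
  | tip => exact (apply_tip hσ).symm

/-- The Cayley closure space of `K` has automorphism group `K`. -/
noncomputable def mulEquivClosedPerm (hf : Injective f) :
    K ≃* closedPerm (cayley f) :=
  .ofBijective ((MulAction.toPermHom K (CayleyPoint K ι)).codRestrict _
    toPerm_mem_closedPerm_cayley) <| by
    refine ⟨fun k l h => ?_, fun σ => ?_⟩
    · have h_perm : MulAction.toPerm k = MulAction.toPerm l := congrArg Subtype.val h
      simpa using Equiv.congr_fun h_perm (left 1)
    · exact (exists_toPerm_eq_of_mem_closedPerm_cayley hf σ.2).imp fun _ => Subtype.ext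

end WellOrder

/-- The Cayley points sorted into their five kinds. -/
def equivSum : CayleyPoint K ι ≃ (K ⊕ K) ⊕ ι ⊕ Bool where
  toFun
    | left g => .inl (.inl g)
    | right h => .inl (.inr h)
    | color i => .inr (.inl i)
    | hub => .inr (.inr false)
    | tip => .inr (.inr true)
  invFun
    | .inl (.inl g) => left g
    | .inl (.inr h) => right h
    | .inr (.inl i) => color i
    | .inr (.inr false) => hub
    | .inr (.inr true) => tip
  left_inv x := by cases x <;> rfl
  right_inv := by rintro ((_ | _) | (_ | _ | _)) <;> rfl

end CayleyPoint

/-! ### Realizing a group and a poset -/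

universe u v

theorem exists_isSimpleClosure_card_eq (K : Type u) [Group K] [Finite K] {N : ℕ}
    (hN : 3 * Nat.card K + 2 ≤ N) :
    ∃ (X : Type u) (c : ClosureOperator (Set X)), Nat.card X = N ∧ IsPointClosed c ∧
      IsSimpleClosure c ∧ Nonempty (K ≃* closedPerm c) := by
  -- Each element of `K` needs its own colour; the remaining colours only adjust the size.
  have h_card : Nat.card K ≤ N - 2 * Nat.card K - 2 := by lia
  let f : K ↪ Fin (N - 2 * Nat.card K - 2) :=
    (Finite.equivFin K).toEmbedding.trans (Fin.castLEEmb h_card)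
  refine ⟨_, CayleyPoint.cayley f, ?_, CayleyPoint.isPointClosed_cayley,
    CayleyPoint.isSimpleClosure_cayley, ⟨CayleyPoint.mulEquivClosedPerm f.injective⟩⟩
  rw [Nat.card_congr CayleyPoint.equivSum, Nat.card_sum, Nat.card_sum, Nat.card_sum, Nat.card_fin,
    Nat.card_eq_fintype_card (α := Bool), Fintype.card_bool]
  lia

/-- Evaluation at the only factor of a product of groups that may be nontrivial. -/
noncomputable def piMulEquivOfSubsingleton {ι : Type*} {M : ι → Type*} [∀ i, MulOneClass (M i)]
    {i₀ : ι} (h : ∀ i, i ≠ i₀ → Subsingleton (M i)) : (∀ i, M i) ≃* M i₀ :=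
  .ofBijective (Pi.evalMonoidHom M i₀) <| by
    refine ⟨fun x y hxy => funext fun i => ?_, surjective_eval i₀⟩
    obtain rfl | hi := eq_or_ne i i₀
    · exact hxy
    · exact (h i hi).elim _ _

theorem exists_closedPerm_mulEquiv_lowerSet_orderIso (P : Type u) [PartialOrder P] [Finite P]
    [Nonempty P] (G : Type v) [Group G] [Finite G] :
    ∃ (X : Type max u v) (_ : Finite X) (c : ClosureOperator (Set X)), IsPointClosed c ∧
      Nonempty (closedPerm c ≃* G) ∧ Nonempty ({S // IsAbsorbing c S} ≃o LowerSet P) := by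
  let p₀ := Classical.arbitrary P
  let N (p : P) : ℕ := 3 * Nat.card G + 2 + Finite.equivFin P p
  have h_pos : 0 < Nat.card G := Nat.card_pos
  have h_block (p : P) : ∃ (X : Type v) (c : ClosureOperator (Set X)), Nat.card X = N p ∧
      IsPointClosed c ∧ IsSimpleClosure c ∧ (p = p₀ → Nonempty (G ≃* closedPerm c)) ∧
        (p ≠ p₀ → Subsingleton (closedPerm c)) := by
    by_cases hp : p = p₀
    · obtain ⟨X, c, h_card, hc, hs, e⟩ := exists_isSimpleClosure_card_eq G (N := N p) (by lia)
      exact ⟨X, c, h_card, hc, hs, fun _ => e, absurd hp⟩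
    · obtain ⟨X, c, h_card, hc, hs, ⟨e⟩⟩ :=
        exists_isSimpleClosure_card_eq PUnit.{v + 1} (N := N p) (by simp; lia)
      exact ⟨X, c, h_card, hc, hs, fun h => absurd h hp, fun _ => e.symm.subsingleton⟩
  choose X c h_card hc hs h_group h_trivial using h_block
  have h_finite (p : P) : Finite (X p) := Nat.finite_of_card_ne_zero (by rw [h_card]; lia)
  have h_nontrivial (p : P) : Nontrivial (X p) :=
    Finite.one_lt_card_iff_nontrivial.1 (by rw [h_card]; lia)
  have h_size : Pairwise fun p q => IsEmpty (X p ≃ X q) := fun p q hpq => ⟨fun e => hpq <|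
    (Finite.equivFin P).injective <| Fin.ext <| by
      have h_eq : N p = N q := (h_card p).symm.trans ((Nat.card_congr e).trans (h_card q))
      lia⟩
  obtain ⟨e⟩ := h_group p₀ rfl
  exact ⟨Σ p, X p, inferInstance, glue c, isPointClosed_glue hc,
    ⟨(piClosedPermMulEquiv hc hs h_size).symm.trans <|
      (piMulEquivOfSubsingleton h_trivial).trans e.symm⟩,
    ⟨(lowerSetOrderIsoAbsorbing hc hs).symm⟩⟩

end IndependenceTheorem

open IndependenceTheorem

/-- The Independence Theorem for finite lattices: for every finite group `G` and
every finite distributive lattice `D` with more than one element, there is a finite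
lattice `L` whose automorphism group is isomorphic to `G` and whose congruence
lattice is isomorphic to `D`. -/
theorem independence_finite_lattices
    (G : Type) [Group G] [Fintype G]
    (D : Type) [DistribLattice D] [Fintype D] [Nontrivial D] :
    ∃ (L : Type) (instL : Lattice L) (_ : Fintype L),
      @AutIsoGroup L instL G _ ∧ @ConIsoLat L instL D _ := by
  classical
  let _ : OrderBot D := Fintype.toOrderBot D
  let e : LowerSet {a : D // SupIrred a} ≃o D := OrderIso.lowerSetSupIrred.symm
  have h_nonempty : Nonempty {a : D // SupIrred a} := by
    refine not_isEmpty_iff.1 fun _ => not_subsingleton D ?_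
    exact (SetLike.coe_injective.comp e.symm.injective).subsingleton
  obtain ⟨X, _, c, hc, ⟨e_aut⟩, ⟨e_con⟩⟩ :=
    exists_closedPerm_mulEquiv_lowerSet_orderIso {a : D // SupIrred a} G
  refine ⟨c.Closeds, inferInstance, Fintype.ofFinite _, ?_, ?_⟩
  · exact autIsoGroup_of_mulEquiv (hc.closedPermMulEquiv.symm.trans e_aut)
  · exact conIsoLat_of_orderIso ((kernelOrderIso hc).trans (e_con.trans e))
end
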